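/- arXiv:1311.7456 — 3 statements merged into one kernel-verified Lean document; each statement's English description precedes it below -/
import Mathlib

section
/- Let p be a prime, K a finite extension of ℚ_p, E/K a quadratic field extension with nontrivial K-automorphism τ, and (V,φ) a nondegenerate Hermitian space over E of dimension 2m with m ≥ 1. Then exactly one of the following holds: (i) V is an orthogonal direct sum of m hyperbolic planes; (ii) V is an orthogonal direct sum of m−1 hyperbolic planes and a 2-dimensional subspace containing no nonzero isotropic vector. -/
/-- A ternary quadratic form over a finite field has a nontrivial zero. -/
theorem FiniteField.exists_ternary_quadratic_zero {k : Type*} [Field k] [Finite k]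
    (a b c d e f : k) :
    ∃ x y z : k, ¬ (x = 0 ∧ y = 0 ∧ z = 0) ∧
      a * x ^ 2 + b * y ^ 2 + c * z ^ 2 + d * (x * y) + e * (x * z) + f * (y * z) = 0 := by
  classical
  have := Fintype.ofFinite k
  obtain ⟨p, hp⟩ := CharP.exists k
  have hprime : p.Prime := (CharP.char_is_prime_or_zero k p).resolve_right
    (CharP.char_ne_zero_of_finite k p)
  let F : MvPolynomial (Fin 3) k :=
    .C a * .X 0 ^ 2 + .C b * .X 1 ^ 2 + .C c * .X 2 ^ 2 + .C d * (.X 0 * .X 1) +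
      .C e * (.X 0 * .X 2) + .C f * (.X 1 * .X 2)
  have hF : F.totalDegree < Fintype.card (Fin 3) := by
    have hC : ∀ (r : k) (g : MvPolynomial (Fin 3) k), g.IsHomogeneous 2 →
        (MvPolynomial.C r * g).IsHomogeneous 2 := fun r g hg => by
      simpa using (MvPolynomial.isHomogeneous_C (Fin 3) r).mul hg
    have hX : ∀ i : Fin 3, (MvPolynomial.X i : MvPolynomial (Fin 3) k).IsHomogeneous 1 :=
      MvPolynomial.isHomogeneous_X k
    have : F.IsHomogeneous 2 :=
      (((((hC a _ ((hX 0).pow 2)).add (hC b _ ((hX 1).pow 2))).add (hC c _ ((hX 2).pow 2))).add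
        (hC d _ ((hX 0).mul (hX 1)))).add (hC e _ ((hX 0).mul (hX 2)))).add
        (hC f _ ((hX 1).mul (hX 2)))
    exact this.totalDegree_le.trans_lt (by simp)
  have hdvd := char_dvd_card_solutions p hF
  have hpos : 0 < Fintype.card {x : Fin 3 → k // MvPolynomial.eval x F = 0} :=
    Fintype.card_pos_iff.mpr ⟨⟨0, by simp [F]⟩⟩
  have hlt := hprime.one_lt.trans_le (Nat.le_of_dvd hpos hdvd)
  obtain ⟨⟨x, hx⟩, hne⟩ := Fintype.exists_ne_of_one_lt_card hlt ⟨0, by simp [F]⟩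
  refine ⟨x 0, x 1, x 2, fun ⟨h0, h1, h2⟩ => hne ?_, by simpa [F] using hx⟩
  ext i
  fin_cases i <;> simpa

open scoped NormedField Valued in
theorem isDiscreteValuationRing_and_finite_residueField (K : Type*) [NontriviallyNormedField K]
    [IsUltrametricDist K] [ProperSpace K] :
    IsDiscreteValuationRing 𝒪[K] ∧ Finite 𝓀[K] := by
  have : CompactSpace 𝒪[K] := by
    refine (isCompact_iff_compactSpace (s := (𝒪[K] : Set K))).mp ?_
    convert! isCompact_closedBall (0 : K) 1
    ext x
    simpa using Valued.integer.mem_iff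
  have : (Valued.v : Valuation K NNReal).RankOne :=
    inferInstanceAs (NormedField.valuation (K := K)).RankOne
  open Valued.integer in
  exact (compactSpace_iff_completeSpace_and_isDiscreteValuationRing_and_finite_residueField.mp
    ‹_›).2

open scoped NormedField Valued in
/-- The norm of a nonarchimedean local field takes a largest value below `1`. -/
theorem exists_uniformizer_norm (K : Type*) [NontriviallyNormedField K] [IsUltrametricDist K]
    [ProperSpace K] :
    ∃ π : K, 0 < ‖π‖ ∧ ‖π‖ < 1 ∧ ∀ x : K, ‖x‖ < 1 → ‖x‖ ≤ ‖π‖ := by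
  obtain ⟨_, -⟩ := isDiscreteValuationRing_and_finite_residueField K
  obtain ⟨ϖ, hϖ⟩ := IsDiscreteValuationRing.exists_irreducible 𝒪[K]
  refine ⟨ϖ, Valued.integer.norm_irreducible_pos hϖ, Valued.integer.norm_irreducible_lt_one hϖ,
    fun x hx => ?_⟩
  have hmem : (⟨x, Valued.integer.mem_iff.mpr hx.le⟩ : 𝒪[K]) ∈ (𝓂[K] : Set 𝒪[K]) := by
    rw [SetLike.mem_coe, IsLocalRing.mem_maximalIdeal, mem_nonunits_iff,
      Valued.integer.isUnit_iff_norm_eq_one]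
    exact hx.ne
  rw [hϖ.maximalIdeal_eq_closedBall] at hmem
  simpa using hmem

open scoped NormedField Valued in
/-- Chevalley's theorem for ternary quadratic forms, lifted to the valuation ring. -/
theorem exists_ternary_quadratic_norm_lt_one (K : Type*) [NontriviallyNormedField K]
    [IsUltrametricDist K] [ProperSpace K] {a b c d e f : K} (ha : ‖a‖ ≤ 1) (hb : ‖b‖ ≤ 1)
    (hc : ‖c‖ ≤ 1) (hd : ‖d‖ ≤ 1) (he : ‖e‖ ≤ 1) (hf : ‖f‖ ≤ 1) :
    ∃ x y z : K, ‖x‖ ≤ 1 ∧ ‖y‖ ≤ 1 ∧ ‖z‖ ≤ 1 ∧ ¬ (‖x‖ < 1 ∧ ‖y‖ < 1 ∧ ‖z‖ < 1) ∧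
      ‖a * x ^ 2 + b * y ^ 2 + c * z ^ 2 + d * (x * y) + e * (x * z) + f * (y * z)‖ < 1 := by
  obtain ⟨_, _⟩ := isDiscreteValuationRing_and_finite_residueField K
  have hres : ∀ x : 𝒪[K], IsLocalRing.residue 𝒪[K] x = 0 ↔ ‖(x : K)‖ < 1 := fun x => by
    rw [IsLocalRing.residue_eq_zero_iff, IsLocalRing.mem_maximalIdeal, mem_nonunits_iff,
      Valued.integer.isUnit_iff_norm_eq_one]
    exact (Valued.integer.norm_le_one x).lt_iff_ne.symm
  let r : ∀ x : K, ‖x‖ ≤ 1 → 𝒪[K] := fun x hx => ⟨x, Valued.integer.mem_iff.mpr hx⟩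
  obtain ⟨x, y, z, hne, h0⟩ := FiniteField.exists_ternary_quadratic_zero
    (IsLocalRing.residue 𝒪[K] (r a ha)) (IsLocalRing.residue 𝒪[K] (r b hb))
    (IsLocalRing.residue 𝒪[K] (r c hc)) (IsLocalRing.residue 𝒪[K] (r d hd))
    (IsLocalRing.residue 𝒪[K] (r e he)) (IsLocalRing.residue 𝒪[K] (r f hf))
  obtain ⟨x, rfl⟩ := IsLocalRing.residue_surjective x
  obtain ⟨y, rfl⟩ := IsLocalRing.residue_surjective y
  obtain ⟨z, rfl⟩ := IsLocalRing.residue_surjective z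
  simp only [← map_mul, ← map_pow, ← map_add, hres] at hne h0
  exact ⟨x, y, z, Valued.integer.norm_le_one x, Valued.integer.norm_le_one y,
    Valued.integer.norm_le_one z, hne, h0⟩

/-- A quadratic polynomial `1 - X + c X ^ 2` with `‖c‖ < 1` has a root. -/
theorem exists_root_one_sub_add_mul_sq {K : Type*} [NormedField K] [IsUltrametricDist K]
    [CompleteSpace K] {c : K} (hc : ‖c‖ < 1) : ∃ s : K, 1 - s + c * s ^ 2 = 0 := by
  let f : K → K := fun s => 1 + c * s ^ 2
  have hmaps : Set.MapsTo f (Metric.closedBall 0 1) (Metric.closedBall 0 1) := by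
    intro s hs
    simp only [mem_closedBall_zero_iff] at hs ⊢
    refine (IsUltrametricDist.norm_add_le_max _ _).trans (max_le (by simp) ?_)
    rw [norm_mul, norm_pow]
    exact mul_le_one₀ hc.le (by positivity) (pow_le_one₀ (norm_nonneg _) hs)
  have hcontr : ContractingWith ‖c‖₊ (hmaps.restrict f _ _) := by
    refine ⟨hc, LipschitzWith.of_dist_le_mul fun s t => ?_⟩
    have hs : ‖(s : K)‖ ≤ 1 := mem_closedBall_zero_iff.mp s.2
    have ht : ‖(t : K)‖ ≤ 1 := mem_closedBall_zero_iff.mp t.2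
    change dist (f s) (f t) ≤ ‖c‖ * dist (s : K) t
    rw [dist_eq_norm, dist_eq_norm,
      show f s - f t = c * (s - t) * (s + t) by simp only [f]; ring, norm_mul, norm_mul]
    exact mul_le_of_le_one_right (by positivity)
      ((IsUltrametricDist.norm_add_le_max _ _).trans (max_le hs ht))
  obtain ⟨s, -, hs, -⟩ := hcontr.exists_fixedPoint' Metric.isClosed_closedBall.isComplete hmaps
    (x := 0) (by simp) (edist_ne_top _ _)
  refine ⟨s, ?_⟩
  have : 1 + c * s ^ 2 = s := hs
  linear_combination this

namespace QuadraticMap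

theorem norm_map_smul_lt_one {K V : Type*} [NormedField K] [AddCommGroup V] [Module K V]
    {Q : QuadraticForm K V} {a : K} {x : V} (ha : ‖a‖ < 1) (hx : ‖Q x‖ ≤ 1) :
    ‖Q (a • x)‖ < 1 := by
  rw [QuadraticMap.map_smul, smul_eq_mul, norm_mul, norm_mul]
  nlinarith [norm_nonneg a, norm_nonneg (Q x), mul_nonneg (norm_nonneg a) (norm_nonneg a)]

section Ultrametric

variable {K V : Type*} [NontriviallyNormedField K] [IsUltrametricDist K]
  [AddCommGroup V] [Module K V] {Q : QuadraticForm K V}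

theorem Anisotropic.sq_norm_polar_le [CompleteSpace K] (hQ : Q.Anisotropic) (x y : V) :
    ‖polar Q x y‖ ^ 2 ≤ ‖Q x‖ * ‖Q y‖ := by
  by_contra! hlt
  set B := polar Q x y with hB
  have hB0 : B ≠ 0 := by
    rintro h
    rw [h, norm_zero, zero_pow two_ne_zero] at hlt
    exact absurd hlt (not_lt.mpr (by positivity))
  have hBpos : 0 < ‖B‖ ^ 2 := by positivity
  obtain ⟨s, hs⟩ := exists_root_one_sub_add_mul_sq (c := Q x * Q y / B ^ 2)
    (by rwa [norm_div, norm_mul, norm_pow, div_lt_one hBpos])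
  set r : K := Q x / B * s with hr
  have hzero : Q (x + (-r) • y) = 0 := by
    rw [QuadraticMap.map_add Q, QuadraticMap.map_smul, polar_smul_right, ← hB, smul_eq_mul,
      smul_eq_mul, hr]
    field_simp at hs ⊢
    linear_combination Q x * hs
  have hx : x = r • y := by
    have := hQ _ hzero
    rwa [neg_smul, ← sub_eq_add_neg, sub_eq_zero] at this
  have h2 : ‖(2 : K)‖ ≤ 1 := by simpa using IsUltrametricDist.norm_natCast_le_one K 2
  have hBeq : B = r * (2 * Q y) := by
    rw [hB, hx, polar_smul_left, polar_self, smul_eq_mul, nsmul_eq_mul]; simp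
  have hQx : Q x = r * r * Q y := by rw [hx, QuadraticMap.map_smul, smul_eq_mul]
  refine absurd hlt (not_lt.mpr ?_)
  rw [hBeq, hQx]
  simp only [norm_mul]
  have : ‖(2 : K)‖ ^ 2 ≤ 1 := pow_le_one₀ (norm_nonneg _) h2
  calc (‖r‖ * (‖(2 : K)‖ * ‖Q y‖)) ^ 2 = ‖(2 : K)‖ ^ 2 * (‖r‖ * ‖r‖ * ‖Q y‖ * ‖Q y‖) := by ring
    _ ≤ _ := mul_le_of_le_one_left (by positivity) this

theorem Anisotropic.norm_polar_le_max [CompleteSpace K] (hQ : Q.Anisotropic) (x y : V) :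
    ‖polar Q x y‖ ≤ max ‖Q x‖ ‖Q y‖ := by
  refine le_of_sq_le_sq ((hQ.sq_norm_polar_le x y).trans ?_) (le_max_of_le_left (norm_nonneg _))
  rw [pow_two]
  gcongr
  exacts [le_max_left _ _, le_max_right _ _]

theorem Anisotropic.norm_map_add_le_max [CompleteSpace K] (hQ : Q.Anisotropic) (x y : V) :
    ‖Q (x + y)‖ ≤ max ‖Q x‖ ‖Q y‖ := by
  rw [QuadraticMap.map_add Q]
  exact (IsUltrametricDist.norm_add_le_max _ _).trans
    (max_le (IsUltrametricDist.norm_add_le_max _ _) (hQ.norm_polar_le_max x y))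

/-- The reduction of an anisotropic form modulo the maximal ideal has dimension at most `2`. -/
theorem Anisotropic.exists_pair_norm_lt_one [ProperSpace K] (hQ : Q.Anisotropic) :
    ∃ u v : V, ∀ x : V, ‖Q x‖ ≤ 1 → ∃ a b : K, ‖Q (x - a • u - b • v)‖ < 1 := by
  by_cases h1 : ∀ x : V, ‖Q x‖ ≤ 1 → ‖Q x‖ < 1
  · exact ⟨0, 0, fun x hx => ⟨0, 0, by simpa using h1 x hx⟩⟩
  push Not at h1
  obtain ⟨u, hu, hu'⟩ := h1
  by_cases h2 : ∀ x : V, ‖Q x‖ ≤ 1 → ∃ a : K, ‖Q (x - a • u)‖ < 1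
  · exact ⟨u, 0, fun x hx => (h2 x hx).imp fun a ha => ⟨0, by simpa using ha⟩⟩
  push Not at h2
  obtain ⟨v, hv, hv'⟩ := h2
  refine ⟨u, v, fun x hx => ?_⟩
  obtain ⟨a, b, c, ha, hb, hc, hne, hlt⟩ := exists_ternary_quadratic_norm_lt_one K hu hv hx
    ((hQ.norm_polar_le_max u v).trans (max_le hu hv))
    ((hQ.norm_polar_le_max u x).trans (max_le hu hx))
    ((hQ.norm_polar_le_max v x).trans (max_le hv hx))
  have hsum : ‖Q (a • u + b • v + c • x)‖ < 1 := by
    convert hlt using 2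
    simp only [QuadraticMap.map_add Q, QuadraticMap.map_smul, polar_add_left, polar_smul_left,
      polar_smul_right, smul_eq_mul]
    ring
  have hdiv : ∀ {d : K} {y z : V}, ‖d‖ = 1 → d • y = z → ‖Q z‖ < 1 → ‖Q y‖ < 1 := by
    rintro d y _ hd rfl hz
    simpa [QuadraticMap.map_smul, hd] using hz
  have hsub : ∀ {y z : V}, ‖Q (y + z)‖ < 1 → ‖Q z‖ < 1 → ‖Q y‖ < 1 := by
    intro y z hyz hz
    have := hQ.norm_map_add_le_max (y + z) (-z)
    rw [add_neg_cancel_right, QuadraticMap.map_neg] at this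
    exact this.trans_lt (max_lt hyz hz)
  have hne0 : ∀ {d : K}, ‖d‖ = 1 → d ≠ 0 := fun hd => norm_ne_zero_iff.mp (by simp [hd])
  rcases hc.lt_or_eq with hc1 | hc1
  · exfalso
    have huv := hsub hsum (norm_map_smul_lt_one hc1 hx)
    rcases hb.lt_or_eq with hb1 | hb1
    · have hau := hsub huv (norm_map_smul_lt_one hb1 hv)
      rcases ha.lt_or_eq with ha1 | ha1
      · exact hne ⟨ha1, hb1, hc1⟩
      · exact absurd (hdiv ha1 rfl hau) (not_lt.mpr hu')
    · refine absurd (hdiv (y := v - (-(b⁻¹ * a)) • u) hb1 ?_ huv) (not_lt.mpr (hv' _))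
      rw [smul_sub, smul_smul, mul_neg, mul_inv_cancel_left₀ (hne0 hb1)]
      module
  · refine ⟨-(c⁻¹ * a), -(c⁻¹ * b), hdiv hc1 ?_ hsum⟩
    rw [smul_sub, smul_sub, smul_smul, smul_smul, mul_neg, mul_neg,
      mul_inv_cancel_left₀ (hne0 hc1), mul_inv_cancel_left₀ (hne0 hc1)]
    module

/-- Over a nonarchimedean local field of characteristic different from `2`, an anisotropic
quadratic form has dimension at most `4`. -/
theorem Anisotropic.finrank_le_four [ProperSpace K] [FiniteDimensional K V]
    (h2 : (2 : K) ≠ 0) (hQ : Q.Anisotropic) : Module.finrank K V ≤ 4 := by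
  obtain ⟨π, hπ0, hπ1, hπ⟩ := exists_uniformizer_norm K
  have hπne : π ≠ 0 := norm_pos_iff.mp hπ0
  have hQ' : (π⁻¹ • Q).Anisotropic := fun x hx =>
    hQ x ((smul_eq_zero.mp hx).resolve_left (inv_ne_zero hπne))
  obtain ⟨w₁, w₂, hw⟩ := hQ.exists_pair_norm_lt_one
  obtain ⟨w₃, w₄, hw'⟩ := hQ'.exists_pair_norm_lt_one
  simp only [smul_apply, smul_eq_mul, norm_mul, norm_inv] at hw'
  have hdescent : ∀ x : V, ‖Q x‖ ≤ 1 → ∃ z : V, ‖Q z‖ ≤ 1 ∧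
      ∃ a b c d : K, x = a • w₁ + b • w₂ + c • w₃ + d • w₄ + π • z := by
    intro x hx
    obtain ⟨a, b, hab⟩ := hw x hx
    obtain ⟨c, d, hcd⟩ := hw' (x - a • w₁ - b • w₂) (by
      rw [inv_mul_le_iff₀ hπ0, mul_one]
      exact hπ _ hab)
    set z := x - a • w₁ - b • w₂ - c • w₃ - d • w₄ with hz
    refine ⟨π⁻¹ • z, ?_, a, b, c, d, ?_⟩
    · have : ‖π⁻¹ * Q z‖ ≤ ‖π‖ := hπ _ (by simpa using hcd)
      rw [norm_mul, norm_inv] at this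
      rw [QuadraticMap.map_smul, smul_eq_mul, mul_assoc, norm_mul, norm_mul, norm_inv,
        inv_mul_le_iff₀ hπ0, mul_one]
      exact this
    · rw [smul_inv_smul₀ hπne, hz]
      abel
  by_contra! hdim
  let f : V →ₗ[K] (Fin 4 → K) := LinearMap.pi
    ![Q.polarBilin w₁, Q.polarBilin w₂, Q.polarBilin w₃, Q.polarBilin w₄]
  obtain ⟨y, hy, hy0⟩ := Submodule.exists_mem_ne_zero_of_ne_bot
    (f.ker_ne_bot_of_finrank_lt (by simpa using hdim))
  have hfy : ∀ i, f y i = 0 := fun i => congrFun (LinearMap.mem_ker.mp hy) i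
  have hy₁ : polar Q w₁ y = 0 := hfy 0
  have hy₂ : polar Q w₂ y = 0 := hfy 1
  have hy₃ : polar Q w₃ y = 0 := hfy 2
  have hy₄ : polar Q w₄ y = 0 := hfy 3
  have hsmall : ∀ n : ℕ, ∀ x : V, ‖Q x‖ ≤ 1 → ‖polar Q x y‖ ≤ ‖π‖ ^ n * max 1 ‖Q y‖ := by
    intro n
    induction n with
    | zero =>
      intro x hx
      rw [pow_zero, one_mul]
      exact (hQ.norm_polar_le_max x y).trans (max_le_max hx le_rfl)
    | succ n ih =>
      intro x hx
      obtain ⟨z, hz, a, b, c, d, rfl⟩ := hdescent x hx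
      simp only [polar_add_left, polar_smul_left, hy₁, hy₂, hy₃, hy₄, smul_eq_mul, mul_zero, add_zero,
        zero_add, norm_mul]
      rw [pow_succ', mul_assoc]
      gcongr
      exact ih z hz
  have hvanish : ∀ x : V, ‖Q x‖ ≤ 1 → polar Q x y = 0 := by
    intro x hx
    have hlim := (tendsto_pow_atTop_nhds_zero_of_lt_one hπ0.le hπ1).mul_const (max 1 ‖Q y‖)
    rw [zero_mul] at hlim
    exact norm_le_zero_iff.mp (ge_of_tendsto' hlim fun n => hsmall n x hx)
  have hQy : Q y ≠ 0 := fun h => hy0 (hQ y h)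
  obtain ⟨t, ht0, ht⟩ : ∃ t : K, t ≠ 0 ∧ ‖Q (t • y)‖ ≤ 1 := by
    rcases le_total ‖Q y‖ 1 with h | h
    · exact ⟨1, one_ne_zero, by simpa using h⟩
    · refine ⟨(Q y)⁻¹, inv_ne_zero hQy, ?_⟩
      rw [QuadraticMap.map_smul, smul_eq_mul, mul_assoc, inv_mul_cancel₀ hQy, mul_one, norm_inv]
      exact inv_le_one_of_one_le₀ h
  have := hvanish _ ht
  rw [polar_smul_left, polar_self, smul_eq_mul, nsmul_eq_mul] at this
  simp_all

end Ultrametric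

end QuadraticMap

section Hermitian

open Module

variable {E V : Type*} [Field E] [AddCommGroup V] [Module E V] {τ : E →+* E}

/-- The vectors `v` with `B v x = 0` for all `x` in a given set. -/
def leftOrthogonal (B : V →ₗ[E] V →ₛₗ[τ] E) (S : Set V) : Submodule E V where
  carrier := {v | ∀ x ∈ S, B v x = 0}
  add_mem' ha hb x hx := by simp [ha x hx, hb x hx]
  zero_mem' x _ := by simp
  smul_mem' c v hv x hx := by simp [hv x hx]

/-- A family of pairwise orthogonal hyperbolic pairs. -/
structure IsHyperbolicFamily (B : V →ₗ[E] V →ₛₗ[τ] E) {r : ℕ} (u w : Fin r → V) : Prop where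
  left : ∀ i j, B (u i) (u j) = 0
  right : ∀ i j, B (w i) (w j) = 0
  pairing : ∀ i j, B (u i) (w j) = if i = j then 1 else 0

variable {B : V →ₗ[E] V →ₛₗ[τ] E}

theorem apply_eq_zero_of_mem_span {S T : Set V} (h : ∀ x ∈ S, ∀ y ∈ T, B x y = 0) {x y : V}
    (hx : x ∈ Submodule.span E S) (hy : y ∈ Submodule.span E T) : B x y = 0 := by
  induction hx using Submodule.span_induction with
  | zero => simp
  | add a b _ _ ha hb => simp [ha, hb]
  | smul c a _ ha => simp [ha]
  | mem a ha =>
    induction hy using Submodule.span_induction with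
    | zero => simp
    | add b c _ _ hb hc => simp [hb, hc]
    | smul c b _ hb => simp [hb]
    | mem b hb => exact h a ha b hb

theorem apply_eq_zero_symm (hB : ∀ v w, B v w = τ (B w v)) {v w : V} (h : B v w = 0) :
    B w v = 0 := by
  rw [hB, h, map_zero]

theorem isInternal_of_orthogonal {ι : Type*} [DecidableEq ι] {W : ι → Submodule E V}
    (horth : ∀ i j, i ≠ j → ∀ v ∈ W i, ∀ w ∈ W j, B v w = 0)
    (hnd : ∀ i, ∀ v ∈ W i, (∀ w ∈ W i, B v w = 0) → v = 0) (htop : ⨆ i, W i = ⊤) :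
    DirectSum.IsInternal W := by
  rw [DirectSum.isInternal_submodule_iff_iSupIndep_and_iSup_eq_top]
  refine ⟨fun i => ?_, htop⟩
  rw [Submodule.disjoint_def]
  intro v hv hv'
  refine hnd i v hv fun w hw => ?_
  have hle : ⨆ (j) (_ : j ≠ i), W j ≤ leftOrthogonal B (W i) :=
    iSup₂_le fun j hj x hx y hy => horth j i hj x hx y hy
  exact hle hv' w hw

theorem finrank_eq_sum_of_isInternal {ι : Type*} [DecidableEq ι] [Fintype ι]
    [FiniteDimensional E V] {W : ι → Submodule E V} (h : DirectSum.IsInternal W) :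
    finrank E V = ∑ i, finrank E (W i) := by
  rw [← (LinearEquiv.ofBijective (DirectSum.coeLinearMap W) h).finrank_eq, finrank_directSum]

theorem finrank_span_hyperbolic_pair (hB : ∀ v w, B v w = τ (B w v)) {u w : V}
    (hu : B u u = 0) (hw : B w w = 0) (huw : B u w = 1) :
    finrank E (Submodule.span E {u, w}) = 2 := by
  have hli : LinearIndependent E ![u, w] := by
    rw [LinearIndependent.pair_iff]
    intro s t hst
    have h1 : B (s • u + t • w) w = 0 := by rw [hst]; simp
    have h2 : B (s • u + t • w) u = 0 := by rw [hst]; simp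
    have hwu : B w u = 1 := by rw [hB, huw, map_one]
    simp only [map_add, map_smul, LinearMap.add_apply, LinearMap.smul_apply, hu, hw, huw, hwu,
      smul_eq_mul, mul_zero, mul_one, add_zero, zero_add] at h1 h2
    exact ⟨h1, h2⟩
  have hrange : ({u, w} : Set V) = Set.range ![u, w] := by simp [Set.pair_comm]
  rw [hrange]
  simpa using finrank_span_eq_card hli

theorem eq_zero_of_mem_span_hyperbolic_pair (hB : ∀ v w, B v w = τ (B w v)) {u w v : V}
    (hu : B u u = 0) (hw : B w w = 0) (huw : B u w = 1) (hv : v ∈ Submodule.span E {u, w})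
    (h : ∀ x ∈ Submodule.span E {u, w}, B v x = 0) : v = 0 := by
  obtain ⟨s, t, rfl⟩ := Submodule.mem_span_pair.mp hv
  have hwu : B w u = 1 := by rw [hB, huw, map_one]
  have h1 := h u (Submodule.subset_span (by simp))
  have h2 := h w (Submodule.subset_span (by simp))
  simp only [map_add, map_smul, LinearMap.add_apply, LinearMap.smul_apply, hu, hw, huw, hwu,
    smul_eq_mul, mul_zero, mul_one, add_zero, zero_add] at h1 h2
  simp [h1, h2]

/-- The orthogonal complement of the span of a hyperbolic family. -/
def hyperbolicComplement (B : V →ₗ[E] V →ₛₗ[τ] E) {r : ℕ} (u w : Fin r → V) : Submodule E V :=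
  leftOrthogonal B (Set.range u ∪ Set.range w)

theorem mem_hyperbolicComplement {r : ℕ} {u w : Fin r → V} {v : V} :
    v ∈ hyperbolicComplement B u w ↔ ∀ i, B v (u i) = 0 ∧ B v (w i) = 0 := by
  refine ⟨fun h i => ⟨h _ (.inl ⟨i, rfl⟩), h _ (.inr ⟨i, rfl⟩)⟩, ?_⟩
  rintro h _ (⟨i, rfl⟩ | ⟨i, rfl⟩)
  exacts [(h i).1, (h i).2]

theorem IsHyperbolicFamily.sub_sum_mem {r : ℕ} {u w : Fin r → V}
    (hB : ∀ v w, B v w = τ (B w v)) (h : IsHyperbolicFamily B u w) (v : V) :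
    v - ∑ i, (B v (w i) • u i + B v (u i) • w i) ∈ hyperbolicComplement B u w := by
  have hpair : ∀ i j, B (w i) (u j) = if i = j then 1 else 0 := fun i j => by
    rw [hB, h.pairing, apply_ite τ, map_one, map_zero]
    simp only [eq_comm]
  rw [mem_hyperbolicComplement]
  intro j
  constructor <;>
  simp [map_sub, map_sum, LinearMap.sum_apply, h.left, h.right, h.pairing, hpair]

/-- An isotropic vector of the complement of a hyperbolic family enlarges the family. -/
theorem IsHyperbolicFamily.exists_cons {r : ℕ} {u w : Fin r → V} (h2 : (2 : E) ≠ 0)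
    (hB : ∀ v w, B v w = τ (B w v)) (hnd : ∀ v, (∀ w, B v w = 0) → v = 0)
    (h : IsHyperbolicFamily B u w) {x : V} (hx : x ∈ hyperbolicComplement B u w)
    (hx0 : x ≠ 0) (hxx : B x x = 0) :
    ∃ y, B x y = 1 ∧ IsHyperbolicFamily B (Fin.cons x u : Fin (r + 1) → V) (Fin.cons y w) := by
  have hττ : ∀ v w, τ (τ (B v w)) = B v w := fun v w => by rw [← hB w v, ← hB v w]
  obtain ⟨z, hz⟩ : ∃ z, B x z ≠ 0 := by
    by_contra! hcon
    exact hx0 (hnd x hcon)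
  set z' := z - ∑ i, (B z (w i) • u i + B z (u i) • w i) with hz'
  have hz'mem := h.sub_sum_mem hB z
  rw [← hz'] at hz'mem
  have hxu := fun i => (mem_hyperbolicComplement.mp hx i).1
  have hxw := fun i => (mem_hyperbolicComplement.mp hx i).2
  have hxz' : B x z' = B x z := by simp [hz', map_sum, hxu, hxw]
  set y₀ := (τ (B x z))⁻¹ • z' with hy₀
  have hxy₀ : B x y₀ = 1 := by simp [hy₀, hττ, hxz', hz]
  have hy₀x : B y₀ x = 1 := by rw [hB, hxy₀, map_one]
  set y := y₀ - (B y₀ y₀ / 2) • x with hy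
  have hxy : B x y = 1 := by simp [hy, hxy₀, hxx]
  have hyy : B y y = 0 := by
    have hreal : τ (B y₀ y₀) = B y₀ y₀ := (hB y₀ y₀).symm
    simp only [hy, map_sub, LinearMap.sub_apply, map_smul, LinearMap.smul_apply, map_smulₛₗ,
      smul_eq_mul, hxx, hxy₀, hy₀x, map_div₀, hreal, map_ofNat]
    field_simp
    ring
  have hymem : y ∈ hyperbolicComplement B u w :=
    Submodule.sub_mem _ (Submodule.smul_mem _ _ hz'mem) (Submodule.smul_mem _ _ hx)
  have hyu := fun i => (mem_hyperbolicComplement.mp hymem i).1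
  have hyw := fun i => (mem_hyperbolicComplement.mp hymem i).2
  refine ⟨y, hxy, ?_, ?_, ?_⟩ <;> intro i j <;> cases i using Fin.cases <;>
    cases j using Fin.cases <;>
    simp [hxx, hyy, hxy, hxu, hxw, hyw, h.left, h.right, h.pairing,
      apply_eq_zero_symm hB (hxu _), apply_eq_zero_symm hB (hyw _),
      apply_eq_zero_symm hB (hyu _), Fin.succ_ne_zero, (Fin.succ_ne_zero _).symm]

theorem exists_isHyperbolicFamily_anisotropic [FiniteDimensional E V] (h2 : (2 : E) ≠ 0)
    (hB : ∀ v w, B v w = τ (B w v)) (hnd : ∀ v, (∀ w, B v w = 0) → v = 0) :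
    ∃ (r : ℕ) (u w : Fin r → V), IsHyperbolicFamily B u w ∧
      ∀ v ∈ hyperbolicComplement B u w, B v v = 0 → v = 0 := by
  have key : ∀ (P : Submodule E V) (r : ℕ) (u w : Fin r → V), IsHyperbolicFamily B u w →
      hyperbolicComplement B u w = P →
      ∃ (r : ℕ) (u w : Fin r → V), IsHyperbolicFamily B u w ∧
        ∀ v ∈ hyperbolicComplement B u w, B v v = 0 → v = 0 := by
    intro P
    induction P using WellFoundedLT.induction with
    | ind P ih =>
      rintro r u w h rfl
      by_cases hani : ∀ v ∈ hyperbolicComplement B u w, B v v = 0 → v = 0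
      · exact ⟨r, u, w, h, hani⟩
      push Not at hani
      obtain ⟨x, hx, hxx, hx0⟩ := hani
      obtain ⟨y, hxy, h'⟩ := h.exists_cons h2 hB hnd hx hx0 hxx
      refine ih _ (lt_of_le_of_ne ?_ ?_) _ _ _ h' rfl
      · intro v hv
        rw [mem_hyperbolicComplement] at hv ⊢
        intro i
        simpa using hv i.succ
      · intro heq
        rw [← heq, mem_hyperbolicComplement] at hx
        simpa [hxy] using (hx 0).2
  exact key _ 0 Fin.elim0 Fin.elim0 ⟨fun i => i.elim0, fun i => i.elim0, fun i => i.elim0⟩ rfl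

/-- The decomposition of a Hermitian space by a hyperbolic family with anisotropic complement. -/
theorem IsHyperbolicFamily.isInternal {r : ℕ} {u w : Fin r → V}
    (hB : ∀ v w, B v w = τ (B w v)) (h : IsHyperbolicFamily B u w)
    (hani : ∀ v ∈ hyperbolicComplement B u w, B v v = 0 → v = 0) :
    DirectSum.IsInternal (fun o : Option (Fin r) =>
      o.elim (hyperbolicComplement B u w) fun i => Submodule.span E {u i, w i}) ∧
    ∀ o o' : Option (Fin r), o ≠ o' →
      ∀ v ∈ o.elim (hyperbolicComplement B u w) fun i => Submodule.span E {u i, w i},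
      ∀ x ∈ o'.elim (hyperbolicComplement B u w) fun i => Submodule.span E {u i, w i},
        B v x = 0 := by
  have hP : ∀ i, ∀ v ∈ hyperbolicComplement B u w, ∀ x ∈ Submodule.span E {u i, w i},
      B v x = 0 := by
    intro i v hv x hx
    refine apply_eq_zero_of_mem_span (S := {v}) ?_ (Submodule.mem_span_singleton_self v) hx
    have := mem_hyperbolicComplement.mp hv i
    simpa using this
  have hpair : ∀ i j, B (w i) (u j) = if j = i then 1 else 0 := fun i j => by
    rw [hB, h.pairing, apply_ite τ, map_one, map_zero]
  have horth : ∀ o o' : Option (Fin r), o ≠ o' →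
      ∀ v ∈ o.elim (hyperbolicComplement B u w) fun i => Submodule.span E {u i, w i},
      ∀ x ∈ o'.elim (hyperbolicComplement B u w) fun i => Submodule.span E {u i, w i},
        B v x = 0 := by
    rintro (_ | i) (_ | j) hne v hv x hx
    · exact absurd rfl hne
    · exact hP j v hv x hx
    · exact apply_eq_zero_symm hB (hP i x hx v hv)
    · have hij : i ≠ j := fun h => hne (congrArg some h)
      refine apply_eq_zero_of_mem_span ?_ hv hx
      simp [h.left, h.right, h.pairing, hpair, hij, hij.symm]
  refine ⟨isInternal_of_orthogonal horth ?_ ?_, horth⟩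
  · rintro (_ | i) v hv hv'
    · exact hani v hv (hv' v hv)
    · exact eq_zero_of_mem_span_hyperbolic_pair hB (h.left i i) (h.right i i)
        (by simp [h.pairing]) hv hv'
  · rw [eq_top_iff]
    intro v _
    rw [← sub_add_cancel v (∑ i, (B v (w i) • u i + B v (u i) • w i))]
    refine add_mem (Submodule.mem_iSup_of_mem none (h.sub_sum_mem hB v)) (sum_mem fun i _ => ?_)
    exact Submodule.mem_iSup_of_mem (some i)
      (add_mem (Submodule.smul_mem _ _ (Submodule.subset_span (by simp)))
        (Submodule.smul_mem _ _ (Submodule.subset_span (by simp))))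

theorem finrank_leftOrthogonal_add_finrank_le [FiniteDimensional E V]
    (hB : ∀ v w, B v w = τ (B w v)) (hnd : ∀ v, (∀ w, B v w = 0) → v = 0)
    (hτ : Function.Surjective τ) (D : Submodule E V) :
    finrank E (leftOrthogonal B (D : Set V)) + finrank E D ≤ finrank E V := by
  let b := finBasis E D
  let f : V →ₗ[E] (Fin (finrank E D) → E) :=
    LinearMap.pi fun i =>
      { toFun := fun v => B v (b i)
        map_add' := fun x y => by simp
        map_smul' := fun c x => by simp }
  have hker : leftOrthogonal B (D : Set V) ≤ LinearMap.ker f := by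
    intro v hv
    ext i
    exact hv _ (b i).2
  have hsurj : LinearMap.range f = ⊤ := by
    by_contra hne
    obtain ⟨g, hg0, hg⟩ := Submodule.exists_le_ker_of_lt_top _ (lt_top_iff_ne_top.mpr hne)
    choose c hc using fun i => hτ (g (Pi.single i 1))
    have hsum : ((∑ i, c i • b i : D) : V) = 0 := by
      refine hnd _ fun v => apply_eq_zero_symm hB ?_
      have : g (f v) = 0 := hg ⟨v, rfl⟩
      rw [LinearMap.pi_apply_eq_sum_univ g] at this
      have hs : ∀ i : Fin (finrank E D), (fun j => if i = j then (1 : E) else 0) = Pi.single i 1 := fun i => by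
        ext j
        simp [Pi.single_apply, eq_comm]
      simpa [map_sum, hc, f, mul_comm, hs] using this
    have hc0 := Fintype.linearIndependent_iff.mp b.linearIndependent c (Subtype.ext hsum)
    refine hg0 (LinearMap.pi_ext' fun i => LinearMap.ext_ring ?_)
    simpa [hc0] using (hc i).symm
  have hrk := f.finrank_range_add_finrank_ker
  rw [hsurj, finrank_top, finrank_fin_fun] at hrk
  have := Submodule.finrank_mono hker
  omega

theorem finrank_add_finrank_sup_le [FiniteDimensional E V]
    (hB : ∀ v w, B v w = τ (B w v)) (hnd : ∀ v, (∀ w, B v w = 0) → v = 0)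
    (hτ : Function.Surjective τ) {U L P : Submodule E V}
    (hU : ∀ x ∈ U, ∀ y ∈ U, B x y = 0) (hL : ∀ x ∈ L, ∀ y ∈ L, B x y = 0)
    (hPL : ∀ x ∈ P, ∀ y ∈ L, B x y = 0) (hP : ∀ x ∈ P, B x x = 0 → x = 0) :
    finrank E U + finrank E (L ⊔ P : Submodule E V) ≤ finrank E V := by
  have hinf : U ⊓ (L ⊔ P) ≤ U ⊓ L := by
    rintro x ⟨hxU, hx⟩
    obtain ⟨l, hl, q, hq, rfl⟩ := Submodule.mem_sup.mp hx
    have h0 := hU _ hxU _ hxU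
    simp only [map_add, LinearMap.add_apply, hL l hl l hl, hPL q hq l hl,
      apply_eq_zero_symm hB (hPL q hq l hl), zero_add] at h0
    rw [hP q hq h0, add_zero] at hxU ⊢
    exact ⟨hxU, hl⟩
  have hsup : U ⊔ (L ⊔ P) ≤ leftOrthogonal B ((U ⊓ L : Submodule E V) : Set V) :=
    sup_le (fun x hx y hy => hU x hx y hy.1)
      (sup_le (fun x hx y hy => hL x hx y hy.2) fun x hx y hy => hPL x hx y hy.2)
  have h1 := Submodule.finrank_sup_add_finrank_inf_eq U (L ⊔ P)
  have h2 := Submodule.finrank_mono hinf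
  have h3 := Submodule.finrank_mono hsup
  have h4 := finrank_leftOrthogonal_add_finrank_le hB hnd hτ (U ⊓ L)
  omega

end Hermitian

theorem QuadraticMap.Anisotropic.finrank_le_four_of_finiteDimensional_padic (p : ℕ)
    [Fact p.Prime] {K : Type*} [Field K] [Algebra ℚ_[p] K] [FiniteDimensional ℚ_[p] K]
    {V : Type*} [AddCommGroup V] [Module K V] [FiniteDimensional K V] {Q : QuadraticForm K V}
    (hQ : Q.Anisotropic) : Module.finrank K V ≤ 4 := by
  have : CharZero K := charZero_of_injective_algebraMap (algebraMap ℚ_[p] K).injective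
  let := spectralNorm.nontriviallyNormedField ℚ_[p] K
  let := spectralNorm.normedSpace ℚ_[p] K
  have : IsUltrametricDist K :=
    IsUltrametricDist.isUltrametricDist_of_forall_norm_add_le_max_norm
      (isNonarchimedean_spectralNorm (K := ℚ_[p]) (L := K))
  have : ProperSpace K := FiniteDimensional.proper ℚ_[p] K
  exact QuadraticMap.Anisotropic.finrank_le_four two_ne_zero hQ

theorem exists_algebraMap_eq_of_fixed {K E : Type*} [Field K] [Field E] [Algebra K E]
    (hKE : Module.finrank K E = 2) {τ : E ≃ₐ[K] E} (hτ : τ ≠ AlgEquiv.refl) {x : E}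
    (hx : τ x = x) : ∃ a : K, algebraMap K E a = x := by
  by_contra! hcon
  have hli : LinearIndependent K ![(1 : E), x] := by
    rw [LinearIndependent.pair_iff' one_ne_zero]
    intro a ha
    exact hcon a (by rw [Algebra.algebraMap_eq_smul_one, ha])
  have htop := hli.span_eq_top_of_card_eq_finrank (by simp [hKE])
  refine hτ (AlgEquiv.ext fun y => ?_)
  have hy : y ∈ Submodule.span K (Set.range ![(1 : E), x]) := htop ▸ Submodule.mem_top
  induction hy using Submodule.span_induction with
  | zero => simp
  | add a b _ _ ha hb => simp_all
  | smul c a _ ha => simp_all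
  | mem a ha =>
    obtain ⟨i, rfl⟩ := ha
    fin_cases i <;> simp [hx]

/-- An anisotropic Hermitian form over a quadratic extension of a `p`-adic field has dimension at
most `2`. -/
theorem finrank_le_two_of_hermitian_anisotropic (p : ℕ) [Fact p.Prime]
    {K : Type*} [Field K] [Algebra ℚ_[p] K] [FiniteDimensional ℚ_[p] K]
    {E : Type*} [Field E] [Algebra K E] (hKE : Module.finrank K E = 2)
    {τ : E ≃ₐ[K] E} (hτ : τ ≠ AlgEquiv.refl)
    {V : Type*} [AddCommGroup V] [Module E V] [FiniteDimensional E V]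
    {B : V →ₗ[E] V →ₛₗ[(τ : E →+* E)] E} (hB : ∀ v w, B v w = τ (B w v))
    (hani : ∀ v, B v v = 0 → v = 0) : Module.finrank E V ≤ 2 := by
  let : Module K V := Module.compHom V (algebraMap K E)
  have : IsScalarTower K E V := IsScalarTower.of_algebraMap_smul fun _ _ => rfl
  have : FiniteDimensional K E := Module.finite_of_finrank_pos (by omega)
  have : FiniteDimensional K V := Module.Finite.trans E V
  obtain ⟨l, hl⟩ := (Algebra.linearMap K E).exists_leftInverse_of_injective
    (LinearMap.ker_eq_bot.mpr (algebraMap K E).injective)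
  have hl' : ∀ a : K, l (algebraMap K E a) = a := fun a => LinearMap.congr_fun hl a
  have hmul : ∀ (c : K) (x : E), l (algebraMap K E c * x) = c * l x := fun c x => by
    rw [← Algebra.smul_def, map_smul, smul_eq_mul]
  have hleft : ∀ (c : K) (v w : V), B (c • v) w = algebraMap K E c * B v w := fun c v w => by
    rw [← algebraMap_smul E c v, map_smul, LinearMap.smul_apply, smul_eq_mul]
  have hright : ∀ (c : K) (v w : V), B v (c • w) = algebraMap K E c * B v w := fun c v w => by
    rw [hB, hleft, map_mul, AlgEquiv.commutes, ← hB]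
  let b : V →ₗ[K] V →ₗ[K] K := LinearMap.mk₂ K (fun v w => l (B v w))
    (fun u v w => by simp) (fun c v w => by rw [hleft, hmul, smul_eq_mul])
    (fun u v w => by simp) (fun c v w => by rw [hright, hmul, smul_eq_mul])
  have hQ : (LinearMap.BilinMap.toQuadraticMap b).Anisotropic := by
    intro v hv
    have hv' : l (B v v) = 0 := hv
    obtain ⟨a, ha⟩ := exists_algebraMap_eq_of_fixed hKE hτ (hB v v).symm
    rw [← ha, hl'] at hv'
    exact hani v (by rw [← ha, hv', map_zero])
  have h4 := hQ.finrank_le_four_of_finiteDimensional_padic p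
  rw [← Module.finrank_mul_finrank K E V, hKE] at h4
  omega

/-- Let `K` be a finite extension of `ℚ_p`, `E/K` quadratic with nontrivial
`K`-automorphism `τ`, and `(V, φ)` a nondegenerate Hermitian space of dimension `2m`, `m ≥ 1`.
Then exactly one of the following holds: (i) `V` is an orthogonal direct sum of `m` hyperbolic
planes; (ii) `V` is an orthogonal direct sum of `m - 1` hyperbolic planes and a 2-dimensional
subspace containing no nonzero isotropic vector. -/
theorem stmt_2 (p : ℕ) [Fact p.Prime]
    {K : Type*} [Field K] [Algebra ℚ_[p] K] [FiniteDimensional ℚ_[p] K]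
    {E : Type*} [Field E] [Algebra K E] (hKE : Module.finrank K E = 2)
    (τ : E ≃ₐ[K] E) (hτ : τ ≠ AlgEquiv.refl)
    (m : ℕ) (hm : 1 ≤ m)
    {V : Type*} [AddCommGroup V] [Module E V] (hV : Module.finrank E V = 2 * m)
    (φ : V → V → E)
    (hadd : ∀ u v w : V, φ (u + v) w = φ u w + φ v w)
    (hsmul : ∀ (a : E) (v w : V), φ (a • v) w = a * φ v w)
    (hherm : ∀ v w : V, φ v w = τ (φ w v))
    (hnd : ∀ v : V, (∀ w : V, φ v w = 0) → v = 0) :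
    Xor'
      (∃ W : Fin m → Submodule E V, DirectSum.IsInternal W ∧
        (∀ i j : Fin m, i ≠ j → ∀ v ∈ W i, ∀ w ∈ W j, φ v w = 0) ∧
        (∀ i : Fin m, ∃ u w : V, φ u u = 0 ∧ φ w w = 0 ∧ φ u w = 1 ∧
          W i = Submodule.span E {u, w}))
      (∃ (W : Fin (m - 1) → Submodule E V) (P : Submodule E V),
        DirectSum.IsInternal (fun o : Option (Fin (m - 1)) => o.elim P W) ∧
        (∀ o o' : Option (Fin (m - 1)), o ≠ o' →
          ∀ v ∈ Option.elim o P W, ∀ w ∈ Option.elim o' P W, φ v w = 0) ∧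
        (∀ i : Fin (m - 1), ∃ u w : V, φ u u = 0 ∧ φ w w = 0 ∧ φ u w = 1 ∧
          W i = Submodule.span E {u, w}) ∧
        Module.finrank E ↥P = 2 ∧
        (∀ v ∈ P, φ v v = 0 → v = 0)) := by
  classical
  have : FiniteDimensional E V := Module.finite_of_finrank_pos (by omega)
  have : CharZero K := charZero_of_injective_algebraMap (algebraMap ℚ_[p] K).injective
  have : CharZero E := charZero_of_injective_algebraMap (algebraMap K E).injective
  have hadd' : ∀ u v w : V, φ u (v + w) = φ u v + φ u w := fun u v w => by
    rw [hherm, hadd, map_add, ← hherm, ← hherm]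
  have hsmul' : ∀ (a : E) (v w : V), φ v (a • w) = τ a * φ v w := fun a v w => by
    rw [hherm, hsmul, map_mul, ← hherm]
  obtain ⟨B, hBφ⟩ : ∃ B : V →ₗ[E] V →ₛₗ[(τ : E →+* E)] E, ∀ v w, φ v w = B v w :=
    ⟨LinearMap.mk₂'ₛₗ (RingHom.id E) (τ : E →+* E) φ hadd hsmul hadd' hsmul', fun _ _ => rfl⟩
  simp only [hBφ] at hherm hnd ⊢
  refine (xor_iff_or_and_not_and _ _).mpr ?_
  constructor
  · obtain ⟨r, u, w, h, hani⟩ := exists_isHyperbolicFamily_anisotropic two_ne_zero hherm hnd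
    obtain ⟨hint, horth⟩ := h.isInternal hherm hani
    set P := hyperbolicComplement B u w
    have hP2 : Module.finrank E P ≤ 2 :=
      finrank_le_two_of_hermitian_anisotropic p hKE hτ
        (B := LinearMap.mk₂'ₛₗ (RingHom.id E) (τ : E →+* E) (fun x y : P => B x y)
          (by simp) (by simp) (by simp) (by simp))
        (fun x y => hherm x y) fun x hx => Subtype.ext (hani x x.2 hx)
    have hplane : ∀ i, Module.finrank E (Submodule.span E {u i, w i}) = 2 := fun i =>
      finrank_span_hyperbolic_pair hherm (h.left i i) (h.right i i) (by simp [h.pairing])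
    have hdim : 2 * m = Module.finrank E P + r * 2 := by
      rw [← hV, finrank_eq_sum_of_isInternal hint, Fintype.sum_option]
      exact congrArg _ ((Finset.sum_congr rfl fun i _ => hplane i).trans (by simp))
    have hpairs : ∀ i, ∃ x y : V, B x x = 0 ∧ B y y = 0 ∧ B x y = 1 ∧
        Submodule.span E {u i, w i} = Submodule.span E {x, y} := fun i =>
      ⟨u i, w i, h.left i i, h.right i i, by simp [h.pairing], rfl⟩
    rcases Nat.eq_zero_or_pos (Module.finrank E P) with h0 | hpos
    · left
      obtain rfl : r = m := by omega
      have hbot : P = ⊥ := Submodule.finrank_eq_zero.mp h0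
      refine ⟨fun i => Submodule.span E {u i, w i}, ?_, fun i j hij =>
        horth (some i) (some j) (by simpa using hij), hpairs⟩
      refine isInternal_of_orthogonal
        (fun i j hij => horth (some i) (some j) (by simpa using hij))
        (fun i v hv hv' => eq_zero_of_mem_span_hyperbolic_pair hherm (h.left i i) (h.right i i)
          (by simp [h.pairing]) hv hv') ?_
      have := hint.submodule_iSup_eq_top
      rwa [iSup_option, Option.elim_none, hbot, bot_sup_eq] at this
    · right
      obtain rfl : r = m - 1 := by omega
      exact ⟨fun i => Submodule.span E {u i, w i}, P, hint, horth, hpairs, by omega, hani⟩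
  · rintro ⟨⟨W, hint, horth, hpairs⟩, W', P, hint', horth', hpairs', -, hani⟩
    choose u w huu _ _ hW using hpairs
    choose u' w' huu' _ _ hW' using hpairs'
    have hu : ∀ i, u i ∈ W i := fun i => hW i ▸ Submodule.subset_span (by simp)
    have hu' : ∀ i, u' i ∈ W' i := fun i => hW' i ▸ Submodule.subset_span (by simp)
    have hU : ∀ x ∈ Submodule.span E (Set.range u), ∀ y ∈ Submodule.span E (Set.range u),
        B x y = 0 := by
      refine fun x hx y hy => apply_eq_zero_of_mem_span ?_ hx hy
      rintro _ ⟨i, rfl⟩ _ ⟨j, rfl⟩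
      rcases eq_or_ne i j with rfl | hij
      exacts [huu i, horth i j hij _ (hu i) _ (hu j)]
    have hL : ∀ x ∈ Submodule.span E (Set.range u'), ∀ y ∈ Submodule.span E (Set.range u'),
        B x y = 0 := by
      refine fun x hx y hy => apply_eq_zero_of_mem_span ?_ hx hy
      rintro _ ⟨i, rfl⟩ _ ⟨j, rfl⟩
      rcases eq_or_ne i j with rfl | hij
      exacts [huu' i, horth' (some i) (some j) (by simpa using hij) _ (hu' i) _ (hu' j)]
    have hPL : ∀ x ∈ P, ∀ y ∈ Submodule.span E (Set.range u'), B x y = 0 := by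
      refine fun x hx y hy => apply_eq_zero_of_mem_span (S := {x}) ?_
        (Submodule.mem_span_singleton_self x) hy
      rintro _ rfl _ ⟨j, rfl⟩
      exact horth' none (some j) (by simp) _ hx _ (hu' j)
    have hle := finrank_add_finrank_sup_le hherm hnd τ.surjective hU hL hPL hani
    have hpair : ∀ {n : ℕ} (x y : Fin n → V) (i : Fin n), Submodule.span E {x i, y i} ≤
        Submodule.span E (Set.range x) ⊔ Submodule.span E (Set.range y) := by
      intro n x y i
      rw [← Submodule.span_union]
      refine Submodule.span_mono ?_
      rintro _ (rfl | rfl)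
      exacts [.inl ⟨i, rfl⟩, .inr ⟨i, rfl⟩]
    have htop : Submodule.span E (Set.range u) ⊔ Submodule.span E (Set.range w) = ⊤ := by
      rw [eq_top_iff, ← hint.submodule_iSup_eq_top]
      exact iSup_le fun i => (hW i).trans_le (hpair u w i)
    have htop' : (Submodule.span E (Set.range u') ⊔ P) ⊔ Submodule.span E (Set.range w') = ⊤ := by
      rw [eq_top_iff, ← hint'.submodule_iSup_eq_top, sup_right_comm]
      refine iSup_le ?_
      rintro (_ | i)
      exacts [le_sup_right, ((hW' i).trans_le (hpair u' w' i)).trans le_sup_left]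
    have h1 := Submodule.finrank_add_le_finrank_add_finrank (Submodule.span E (Set.range u))
      (Submodule.span E (Set.range w))
    have h2 := Submodule.finrank_add_le_finrank_add_finrank (Submodule.span E (Set.range u') ⊔ P)
      (Submodule.span E (Set.range w'))
    rw [htop, finrank_top] at h1
    rw [htop', finrank_top] at h2
    have h3 := finrank_range_le_card (R := E) w
    have h4 := finrank_range_le_card (R := E) w'
    rw [Fintype.card_fin, Set.finrank] at h3 h4
    omega
end

section
/- Let p be an odd prime, K a finite extension of ℚ_p with residue field of cardinality q, and E/K a totally ramified quadratic extension. Fix r ≥ 1, set s = 2r, let K_s be the unramified extension of K of degree s (in a fixed algebraic closure) and E_s = E·K_s, so that Gal(E_s/K) ≅ ℤ/sℤ × ℤ/2ℤ, with σ the element inducing the q-power Frobenius on the residue field and fixing E, and τ the nontrivial element fixing K_s. Put η = τσ^r and let L be the fixed field of η, which contains the unramified extension K_r of K of degree r with L/K_r ramified quadratic. Choose a uniformizer π_L of L with Tr_{L/K_r}(π_L) = 0, let κ ∈ L^×, and define the Hermitian form φ_κ on the s-dimensional E-vector space E_s by φ_κ(x,y) = Tr_{E_s/E}((κ/π_L)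 · x · η(y)). Then there exists an E-subspace X ⊆ E_s with dim_E X = r and φ_κ(x,y) = 0 for all x,y ∈ X if and only if κ ∈ Nm_{E_s/L}(E_s^×). -/
open IsLocalRing

section

open Module

/-- The fibres of a nonzero linear functional on a finite-dimensional space over a finite field. -/
theorem card_mul_card_fiber_of_ne_zero {k V : Type*} [Field k] [Fintype k] [AddCommGroup V]
    [Module k V] [Fintype V] [DecidableEq k] (f : V →ₗ[k] k) (hf : f ≠ 0) (c : k) :
    Fintype.card k * (Finset.univ.filter fun x => f x = c).card = Fintype.card V := by
  classical
  have hsurj := LinearMap.surjective hf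
  have hfib : ∀ d : k, (Finset.univ.filter fun x => f x = d).card =
      (Finset.univ.filter fun x => f x = c).card := by
    intro d
    obtain ⟨w, hw⟩ := hsurj (c - d)
    refine Finset.card_bij (fun x _ => x + w) ?_ ?_ ?_
    · intro x hx
      simp only [Finset.mem_filter, Finset.mem_univ, true_and] at hx ⊢
      rw [map_add, hx, hw]; ring
    · intro x _ y _ h
      exact add_right_cancel h
    · intro y hy
      simp only [Finset.mem_filter, Finset.mem_univ, true_and] at hy
      refine ⟨y - w, ?_, by simp⟩
      simp [hy, hw]
  have h := Finset.card_eq_sum_card_fiberwise (f := f) (s := Finset.univ) (t := Finset.univ)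
    (by simp)
  rw [Finset.sum_congr rfl fun d _ => hfib d] at h
  simpa using h.symm

/-- The polynomial `∑_{i<r} X^((1+Q) q^i)` has few distinct roots, as `0` is a multiple root. -/
theorem card_filter_sum_pow_eq_zero_le {F : Type*} [Field F] [Fintype F] [DecidableEq F]
    {q r Q : ℕ} (hq : 1 < q) (hr : 1 ≤ r) :
    (Finset.univ.filter fun x : F => ∑ i ∈ Finset.range r, (x ^ (1 + Q)) ^ q ^ i = 0).card ≤
      1 + (1 + Q) * (q ^ (r - 1) - 1) := by
  classical
  let R : Polynomial F := ∑ i ∈ Finset.range r, Polynomial.X ^ ((1 + Q) * (q ^ i - 1))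
  have hR0 : R.eval 0 = 1 := by
    rw [Polynomial.eval_finsetSum, Finset.sum_eq_single 0]
    · simp
    · intro i _ hi
      have : 1 < q ^ i := Nat.one_lt_pow hi hq
      simp; omega
    · simp; omega
  have hR : R ≠ 0 := by
    rintro h
    simp [h] at hR0
  have hdeg : R.natDegree ≤ (1 + Q) * (q ^ (r - 1) - 1) := by
    refine Polynomial.natDegree_sum_le_of_forall_le _ _ fun i hi => ?_
    rw [Polynomial.natDegree_X_pow]
    have : q ^ i ≤ q ^ (r - 1) :=
      Nat.pow_le_pow_right (by omega) (by have := Finset.mem_range.1 hi; omega)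
    gcongr
  have hsub : (Finset.univ.filter fun x : F => ∑ i ∈ Finset.range r, (x ^ (1 + Q)) ^ q ^ i = 0) ⊆
      insert 0 R.roots.toFinset := by
    intro x hx
    simp only [Finset.mem_filter, Finset.mem_univ, true_and] at hx
    rw [Finset.mem_insert, Multiset.mem_toFinset, Polynomial.mem_roots hR]
    by_cases h0 : x = 0
    · exact Or.inl h0
    right
    have : x ^ (1 + Q) * R.eval x = 0 := by
      rw [← hx, Polynomial.eval_finsetSum, Finset.mul_sum]
      refine Finset.sum_congr rfl fun i _ => ?_
      have : 1 ≤ q ^ i := Nat.one_le_pow _ _ (by omega)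
      obtain ⟨m, hm⟩ := Nat.exists_eq_add_of_le this
      rw [Polynomial.eval_pow, Polynomial.eval_X, ← pow_add, ← pow_mul, hm]
      congr 1
      rw [Nat.add_sub_cancel_left]; ring
    exact (mul_eq_zero.1 this).resolve_left (pow_ne_zero _ h0)
  calc _ ≤ (insert 0 R.roots.toFinset).card := Finset.card_le_card hsub
    _ ≤ R.roots.toFinset.card + 1 := Finset.card_insert_le _ _
    _ ≤ R.natDegree + 1 := by
        gcongr
        exact (Multiset.toFinset_card_le _).trans (Polynomial.card_roots' _)
    _ ≤ _ := by omega

/-- For an extension `F/k` of finite fields of degree `2r` and odd characteristic, the symmetric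
form `Tr_{F/k}(x y^(q^r))` has no totally isotropic subspace of dimension at least `r`. -/
theorem finrank_lt_of_trace_mul_pow_eq_zero {k F : Type*} [Field k] [Field F] [Finite F]
    [Algebra k F] {r : ℕ} (hr : 1 ≤ r) (h2 : (2 : F) ≠ 0) (hrank : finrank k F = 2 * r)
    (X : Submodule k F)
    (hX : ∀ x ∈ X, ∀ y ∈ X, Algebra.trace k F (x * y ^ Nat.card k ^ r) = 0) :
    finrank k X < r := by
  classical
  by_contra! hle
  have := Finite.of_injective _ (FaithfulSMul.algebraMap_injective k F)
  have := Fintype.ofFinite k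
  have := Fintype.ofFinite F
  have h2k : (2 : k) ≠ 0 := fun h => h2 (by
    rw [← map_ofNat (algebraMap k F) 2, h, map_zero])
  set q := Nat.card k with hqdef
  have hcardk : Fintype.card k = q := Fintype.card_eq_nat_card
  have hq : 1 < q := hcardk ▸ Fintype.one_lt_card
  have hcardF : Fintype.card F = q ^ (2 * r) := by
    rw [Module.card_eq_pow_finrank (K := k), hrank, hcardk]
  let φ : F ≃ₐ[k] F := FiniteField.frobeniusAlgEquivOfAlgebraic k F ^ r
  have hφ : ∀ x, φ x = x ^ q ^ r := fun x => by
    simp only [φ]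
    rw [AlgEquiv.coe_pow, FiniteField.coe_frobeniusAlgEquivOfAlgebraic_iterate, hcardk]
  have hpow : ∀ x : F, x ^ q ^ (2 * r) = x := fun x => by rw [← hcardF, FiniteField.pow_card]
  have hφφ : ∀ x, φ (φ x) = x := fun x => by
    rw [hφ, hφ, ← pow_mul, ← pow_add, ← two_mul, hpow]
  simp only [← hφ] at hX
  have htrφ : ∀ x, Algebra.trace k F (φ x) = Algebra.trace k F x := fun x =>
    Algebra.trace_eq_of_algEquiv φ x
  -- `X` is its own orthogonal complement
  let W : Submodule k F := X.map (φ.toLinearEquiv : F →ₗ[k] F)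
  have hWrank : finrank k W = finrank k X := LinearEquiv.finrank_map_eq φ.toLinearEquiv X
  have horth := LinearMap.BilinForm.finrank_orthogonal (traceForm_nondegenerate k F) W
  have hXle : X ≤ (Algebra.traceForm k F).orthogonal W := by
    rintro x hx _ ⟨y, hy, rfl⟩
    have := hX x hx y hy
    rw [mul_comm] at this
    exact this
  have hrX := Submodule.finrank_mono hXle
  have hXr : finrank k X = r := by omega
  have hXeq : X = (Algebra.traceForm k F).orthogonal W :=
    Submodule.eq_of_le_of_finrank_le hXle (by omega)
  let Q : F → k := fun v => Algebra.trace k F (v * φ v)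
  have hQadd : ∀ v, ∀ x ∈ X, Q (v + x) = Q v + 2 * Algebra.trace k F (v * φ x) := by
    intro v x hx
    have h1 : Algebra.trace k F (x * φ v) = Algebra.trace k F (v * φ x) := by
      rw [← htrφ, map_mul, hφφ, mul_comm]
    have h3 := hX x hx x hx
    simp only [Q]
    rw [map_add, add_mul, mul_add, mul_add, map_add, map_add, map_add, h1, h3]
    ring
  let f : F → X →ₗ[k] k := fun v =>
    (2 : k) • ((Algebra.trace k F ∘ₗ LinearMap.mulLeft k v ∘ₗ φ.toLinearMap) ∘ₗ X.subtype)
  have hf : ∀ v, ∀ x : X, f v x = 2 * Algebra.trace k F (v * φ x) := fun v x => rfl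
  have hf0 : ∀ v, v ∉ X → f v ≠ 0 := by
    intro v hv h
    apply hv
    rw [hXeq]
    rintro _ ⟨y, hy, rfl⟩
    have := hf v ⟨y, hy⟩
    rw [h] at this
    have := (mul_eq_zero.1 this.symm).resolve_left h2k
    rw [mul_comm] at this
    exact this
  let Z : Finset F := Finset.univ.filter fun v => Q v = 0
  let N : F → ℕ := fun v => (Finset.univ.filter fun x : X => Q (v + x) = 0).card
  have hcardX : Fintype.card X = q ^ r := by
    rw [Module.card_eq_pow_finrank (K := k), hXr, hcardk]
  have hsum : ∑ v : F, N v = q ^ r * Z.card := by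
    simp only [N, Finset.card_filter]
    rw [Finset.sum_comm]
    have : ∀ x : X, ∑ v : F, (if Q (v + x) = 0 then 1 else 0) = Z.card := by
      intro x
      rw [Finset.card_filter]
      exact Equiv.sum_comp (Equiv.addRight (x : F)) fun v => if Q v = 0 then 1 else 0
    rw [Finset.sum_congr rfl fun x _ => this x]
    simp [hcardX]
  have hNout : ∀ v, v ∉ X → q * N v = q ^ r := by
    intro v hv
    have := card_mul_card_fiber_of_ne_zero (f v) (hf0 v hv) (- Q v)
    rw [hcardk, hcardX] at this
    rw [← this]
    refine congrArg (q * Finset.card ·) (Finset.ext fun x => ?_)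
    simp only [Finset.mem_filter, Finset.mem_univ, true_and]
    rw [hQadd v x x.2, hf, eq_neg_iff_add_eq_zero, add_comm]
  have hNin : ∀ v ∈ X, N v = q ^ r := by
    intro v hv
    simp only [N]
    rw [Finset.filter_true_of_mem, Finset.card_univ, hcardX]
    intro x _
    exact hX _ (X.add_mem hv x.2) _ (X.add_mem hv x.2)
  have hZlow : q ^ r * Z.card = q ^ r * q ^ r + (q ^ (2 * r) - q ^ r) * q ^ (r - 1) := by
    rw [← hsum, ← Finset.sum_filter_add_sum_filter_not Finset.univ (fun v => v ∈ X)]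
    have hc : (Finset.univ.filter fun v => v ∈ X).card = q ^ r := by
      rw [← hcardX, Fintype.card_subtype]
    have hc' : (Finset.univ.filter fun v => v ∉ X).card = q ^ (2 * r) - q ^ r := by
      rw [← hc, ← hcardF, ← Finset.card_univ, ← Finset.card_filter_add_card_filter_not
        (s := Finset.univ) (fun v => v ∈ X), Nat.add_sub_cancel_left]
    congr 1
    · rw [Finset.sum_congr rfl fun v hv => hNin v (Finset.mem_filter.1 hv).2]
      simp [hc]
    · have : ∀ v, v ∉ X → N v = q ^ (r - 1) := by
        intro v hv
        have h := hNout v hv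
        obtain ⟨t, rfl⟩ := Nat.exists_eq_add_of_le' hr
        rw [pow_succ'] at h
        exact Nat.eq_of_mul_eq_mul_left (by omega) h
      rw [Finset.sum_congr rfl fun v hv => this v (Finset.mem_filter.1 hv).2]
      simp only [Finset.sum_const, smul_eq_mul, hc']
  have hZup : Z.card ≤ 1 + (1 + q ^ r) * (q ^ (r - 1) - 1) := by
    refine le_trans (Finset.card_le_card ?_) (card_filter_sum_pow_eq_zero_le (F := F) hq hr)
    intro v hv
    simp only [Z, Q, Finset.mem_filter, Finset.mem_univ, true_and] at hv ⊢
    have h := congrArg (algebraMap k F) hv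
    rw [FiniteField.algebraMap_trace_eq_sum_pow, hrank, two_mul, Finset.sum_range_add,
      map_zero] at h
    have hv' : v * φ v = v ^ (1 + q ^ r) := by rw [hφ, pow_add, pow_one]
    have hrep : ∀ i, (v ^ (1 + q ^ r)) ^ Nat.card k ^ (r + i) = (v ^ (1 + q ^ r)) ^ q ^ i := by
      intro i
      rw [pow_add (Nat.card k), pow_mul]
      congr 1
      rw [← hv', ← hqdef, ← hφ, map_mul, hφφ, mul_comm]
    simp only [hv', hrep] at h
    rw [← two_mul] at h
    exact (mul_eq_zero.1 h).resolve_left h2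
  obtain ⟨t, rfl⟩ := Nat.exists_eq_add_of_le' hr
  simp only [Nat.add_sub_cancel] at hZlow hZup
  set b := q ^ t with hb
  have hb1 : 1 ≤ b := Nat.one_le_pow _ _ (by omega)
  have ha : q ^ (t + 1) = q * b := pow_succ' q t
  have ha2 : q ^ (2 * (t + 1)) = (q * b) * (q * b) := by rw [two_mul, pow_add, ha]
  rw [ha, ha2] at hZlow
  rw [ha] at hZup
  have hab : b < q * b := by nlinarith
  clear_value b
  generalize q * b = a at *
  obtain ⟨b', rfl⟩ := Nat.exists_eq_add_of_le' hb1
  obtain ⟨a', rfl⟩ := Nat.exists_eq_add_of_le' (by omega : 1 ≤ a)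
  simp only [Nat.add_sub_cancel] at hZup
  have h3 : (a' + 1) * (a' + 1) - (a' + 1) = (a' + 1) * a' := by
    rw [mul_add, mul_one, Nat.add_sub_cancel]
  rw [h3, mul_assoc, ← mul_add] at hZlow
  have := Nat.eq_of_mul_eq_mul_left (by omega) hZlow
  nlinarith

theorem isAdicComplete_of_finite_of_free {R M : Type*} [CommRing R] (I : Ideal R)
    [IsAdicComplete I R] [AddCommGroup M] [Module R M] [Module.Finite R M] [Module.Free R M] :
    IsAdicComplete I M := by
  let b := Module.Free.chooseBasis R M
  have key : ∀ (n : ℕ) (x : M), x ∈ (I ^ n • ⊤ : Submodule R M) ↔ ∀ i, b.repr x i ∈ I ^ n := by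
    intro n x
    constructor
    · intro hx i
      induction hx using Submodule.smul_induction_on' with
      | smul c hc y _ =>
        rw [map_smul, Finsupp.smul_apply, smul_eq_mul]
        exact Ideal.mul_mem_right _ _ hc
      | add y _ z _ hy hz =>
        rw [map_add, Finsupp.add_apply]
        exact add_mem hy hz
    · intro h
      rw [← b.sum_repr x]
      exact Submodule.sum_mem _ fun i _ => Submodule.smul_mem_smul (h i) trivial
  have keyR : ∀ (n : ℕ) (x y : R), x ≡ y [SMOD (I ^ n • ⊤ : Submodule R R)] ↔ x - y ∈ I ^ n := by
    intro n x y
    rw [SModEq.sub_mem, smul_eq_mul, Ideal.mul_top]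
  have hH : IsHausdorff I M := ⟨fun x hx => by
    apply b.repr.injective
    rw [map_zero]
    ext i
    refine IsHausdorff.haus (I := I) inferInstance _ fun n => ?_
    have h := (key n x).1 (by simpa [SModEq.sub_mem] using hx n) i
    rw [keyR]
    simpa using h⟩
  have hP : IsPrecomplete I M := ⟨fun f hf => by
    have : ∀ i, ∃ L : R, ∀ n, b.repr (f n) i ≡ L [SMOD (I ^ n • ⊤ : Submodule R R)] := fun i =>
      IsPrecomplete.prec (I := I) inferInstance fun {m n} hmn => by
        rw [keyR]
        have h := (key m _).1 (SModEq.sub_mem.1 (hf hmn)) i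
        simpa using h
    choose L hL using this
    refine ⟨∑ i, L i • b i, fun n => SModEq.sub_mem.2 ((key n _).2 fun i => ?_)⟩
    rw [map_sub, Finsupp.sub_apply, Module.Basis.repr_sum_self, ← keyR]
    exact hL i n⟩
  exact { hH, hP with }

section
variable {p : ℕ} [Fact p.Prime] {O : Type*} [CommRing O] [Algebra ℤ_[p] O] [Module.Finite ℤ_[p] O]

variable (p O) in
theorem finite_quotient_span_natCast : Finite (O ⧸ Ideal.span {(p : O)}) := by
  have hfin : Finite (ℤ_[p] ⧸ maximalIdeal ℤ_[p]) :=
    Finite.of_equiv _ (PadicInt.residueField (p := p)).symm.toEquiv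
  have hmap : (maximalIdeal ℤ_[p]).map (algebraMap ℤ_[p] O) = Ideal.span {(p : O)} := by
    rw [PadicInt.maximalIdeal_eq_span_p, Ideal.map_span]
    simp
  rw [← hmap]
  have : Module.Finite (ℤ_[p] ⧸ maximalIdeal ℤ_[p])
    (O ⧸ (maximalIdeal ℤ_[p]).map (algebraMap ℤ_[p] O)) :=
    inferInstance
  exact Module.finite_of_finite (ℤ_[p] ⧸ maximalIdeal ℤ_[p])

variable [IsLocalRing O]

theorem exists_pow_mem_span_natCast {a : O}
    (ha : a ∈ maximalIdeal O) : ∃ n : ℕ, a ^ n ∈ Ideal.span {(p : O)} := by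
  have := finite_quotient_span_natCast p O
  obtain ⟨i, -, j, -, hij, h⟩ := Set.infinite_univ.exists_lt_map_eq_of_mapsTo (s := Set.univ)
    (f := fun n : ℕ => Ideal.Quotient.mk (Ideal.span {(p : O)}) (a ^ n)) (t := Set.univ)
    (fun _ _ => trivial) Set.finite_univ
  refine ⟨i, ?_⟩
  obtain ⟨d, rfl⟩ := Nat.exists_eq_add_of_lt hij
  have hu : IsUnit (1 - a ^ (d + 1)) := by
    by_contra hn
    have h1 : (1 - a ^ (d + 1)) + a ^ (d + 1) ∈ maximalIdeal O :=
      add_mem ((mem_maximalIdeal _).2 hn) (Ideal.pow_mem_of_mem _ ha _ (by omega))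
    rw [sub_add_cancel] at h1
    exact (mem_maximalIdeal _).1 h1 isUnit_one
  have hm : a ^ i * (1 - a ^ (d + 1)) ∈ Ideal.span {(p : O)} := by
    rw [mul_sub, mul_one, ← pow_add, ← add_assoc]
    exact Ideal.Quotient.eq.1 h
  exact (Ideal.mul_unit_mem_iff_mem _ hu).1 hm

theorem isUnit_two_of_algebra_padicInt {O : Type*} [CommRing O] [Algebra ℤ_[p] O] (hp : p ≠ 2) :
    IsUnit (2 : O) := by
  have h : IsUnit ((2 : ℕ) : ℤ_[p]) := by
    rw [PadicInt.isUnit_iff, PadicInt.norm_natCast_eq_one_iff]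
    exact (Nat.coprime_primes Fact.out Nat.prime_two).2 hp
  have h' := h.map (algebraMap ℤ_[p] O)
  rwa [map_natCast, Nat.cast_ofNat] at h'

/-- Principal units of a finite free local `ℤ_[p]`-algebra are squares when `p` is odd. -/
theorem isSquare_of_sub_one_mem_maximalIdeal [Module.Free ℤ_[p] O] (hp : p ≠ 2) {u : O}
    (hu : u - 1 ∈ maximalIdeal O) : IsSquare u := by
  have hspan : (maximalIdeal ℤ_[p]).map (algebraMap ℤ_[p] O) = Ideal.span {(p : O)} := by
    rw [PadicInt.maximalIdeal_eq_span_p, Ideal.map_span]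
    simp
  have hc : IsAdicComplete (Ideal.span {(p : O)}) O := by
    rw [← hspan, IsAdicComplete.map_algebraMap_iff]
    exact isAdicComplete_of_finite_of_free _
  have hpp : p.Prime := Fact.out
  obtain ⟨n, hn⟩ := exists_pow_mem_span_natCast (p := p) hu
  have hpn : u ^ p ^ n - 1 ∈ Ideal.span {(p : O)} := by
    obtain ⟨t, ht⟩ := exists_add_pow_prime_pow_eq hpp (u - 1) 1 n
    rw [sub_add_cancel, one_pow] at ht
    rw [ht, add_sub_right_comm, add_sub_cancel_right]
    refine add_mem (Ideal.pow_mem_of_pow_mem _ hn (Nat.lt_pow_self hpp.one_lt).le) ?_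
    rw [mul_assoc, mul_assoc]
    exact Ideal.mul_mem_right _ _ (Ideal.mem_span_singleton_self _)
  have h2 : IsUnit (2 : O) := isUnit_two_of_algebra_padicInt hp
  obtain ⟨w, hw, -⟩ := HenselianRing.is_henselian (I := Ideal.span {(p : O)})
    (Polynomial.X ^ 2 - Polynomial.C (u ^ p ^ n)) (Polynomial.monic_X_pow_sub_C _ two_ne_zero) 1
    (by simpa using neg_mem hpn) (by
      rw [Polynomial.derivative_sub, Polynomial.derivative_C, Polynomial.derivative_X_pow]
      simpa using h2.map (Ideal.Quotient.mk (Ideal.span {(p : O)})))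
  have hw2 : w ^ 2 = u ^ p ^ n := by simpa [sub_eq_zero] using hw
  have huu : IsUnit u := by
    by_contra hn
    have h1 := sub_mem ((mem_maximalIdeal _).2 hn) hu
    rw [sub_sub_cancel] at h1
    exact (mem_maximalIdeal _).1 h1 isUnit_one
  obtain ⟨m, hm⟩ := (hpp.odd_of_ne_two hp).pow (n := n)
  obtain ⟨v, rfl⟩ := huu
  refine ⟨w * (v⁻¹ ^ m : Oˣ), ?_⟩
  rw [← sq, mul_pow, hw2, hm]
  norm_cast
  group

end

section Reduction

variable (A : Type*) {B E V : Type*} [CommRing A] [IsDomain A] [ValuationRing A]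
  [CommRing B] [IsLocalRing B] [Algebra A B] [IsLocalHom (algebraMap A B)]
  [Field E] [Algebra A E] [IsFractionRing A E]
  [Field V] [Algebra E V] [Algebra A V] [IsScalarTower A E V]
  [Algebra B V] [IsScalarTower A B V]

variable (B) in
/-- The image in the residue field of `B` of the `B`-integral elements of a subspace of `V`. -/
def residueSubmodule (X : Submodule E V) : Submodule (ResidueField A) (ResidueField B) where
  carrier := {y | ∃ b : B, algebraMap B V b ∈ X ∧ residue B b = y}
  add_mem' := by
    rintro _ _ ⟨b, hb, rfl⟩ ⟨c, hc, rfl⟩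
    exact ⟨b + c, by simpa using X.add_mem hb hc, map_add _ _ _⟩
  zero_mem' := ⟨0, by simp, map_zero _⟩
  smul_mem' := by
    rintro c _ ⟨b, hb, rfl⟩
    obtain ⟨a, rfl⟩ := residue_surjective c
    refine ⟨algebraMap A B a * b, ?_, ?_⟩
    · rw [map_mul, ← IsScalarTower.algebraMap_apply A B V, IsScalarTower.algebraMap_apply A E V,
        ← Algebra.smul_def]
      exact X.smul_mem _ hb
    · rw [map_mul, Algebra.smul_def, ResidueField.algebraMap_residue]

variable {A}

theorem residueSubmodule_sup_span_singleton_le (X : Submodule E V) (v : V) :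
    ∃ y, residueSubmodule A B (X ⊔ E ∙ v) ≤
      residueSubmodule A B X ⊔ (ResidueField A ∙ y) := by
  by_cases h : residueSubmodule A B (X ⊔ E ∙ v) ≤ residueSubmodule A B X
  · exact ⟨0, h.trans le_sup_left⟩
  obtain ⟨_, ⟨y, hy, rfl⟩, hyX⟩ := Set.not_subset.1 h
  refine ⟨residue B y, ?_⟩
  rintro _ ⟨x, hx, rfl⟩
  obtain ⟨y₀, hy₀, _, hc, hyc⟩ := Submodule.mem_sup.1 hy
  obtain ⟨x₀, hx₀, _, hd, hxd⟩ := Submodule.mem_sup.1 hx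
  obtain ⟨c, rfl⟩ := Submodule.mem_span_singleton.1 hc
  obtain ⟨d, rfl⟩ := Submodule.mem_span_singleton.1 hd
  -- an integral combination lying in `X`
  have comb : ∀ (a : A) (z w : B) (z₀ w₀ : V) (m n : E), z₀ ∈ X → w₀ ∈ X →
      z₀ + m • v = algebraMap B V z → w₀ + n • v = algebraMap B V w →
      algebraMap A E a * m = n → algebraMap B V (w - algebraMap A B a * z) ∈ X := by
    rintro a z w z₀ w₀ m n hz₀ hw₀ hz hw rfl
    have : algebraMap B V (w - algebraMap A B a * z) = w₀ - algebraMap A E a • z₀ := by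
      rw [map_sub, map_mul, ← hz, ← hw, ← IsScalarTower.algebraMap_apply A B V,
        IsScalarTower.algebraMap_apply A E V, mul_smul, Algebra.smul_def (_ : E) (m • v),
        Algebra.smul_def (_ : E) z₀]
      ring
    rw [this]
    exact X.sub_mem hw₀ (X.smul_mem _ hz₀)
  have hc0 : c ≠ 0 := by
    rintro rfl
    rw [zero_smul, add_zero] at hyc
    exact hyX ⟨y, hyc ▸ hy₀, rfl⟩
  rcases eq_or_ne d 0 with rfl | hd0
  · rw [zero_smul, add_zero] at hxd
    exact Submodule.mem_sup_left ⟨x, hxd ▸ hx₀, rfl⟩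
  have main : ∀ a : A, algebraMap A E a * c = d → residue B x ∈
      residueSubmodule A B X ⊔ (ResidueField A ∙ residue B y) := by
    intro a ha
    have h1 := comb a y x y₀ x₀ c d hy₀ hx₀ hyc hxd ha
    have h2 : residue B x = residue B (x - algebraMap A B a * y) + residue A a • residue B y := by
      rw [Algebra.smul_def, ResidueField.algebraMap_residue, map_sub, map_mul, sub_add_cancel]
    rw [h2]
    exact add_mem (Submodule.mem_sup_left ⟨_, h1, rfl⟩)
      (Submodule.mem_sup_right (Submodule.smul_mem _ _ (Submodule.mem_span_singleton_self _)))
  rcases ValuationRing.isInteger_or_isInteger A (d / c) with ⟨a, ha⟩ | ⟨a, ha⟩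
  · exact main a (by rw [ha, div_mul_cancel₀ _ hc0])
  · have ha' : algebraMap A E a * d = c := by rw [ha, inv_div, div_mul_cancel₀ _ hd0]
    by_cases hu : IsUnit a
    · obtain ⟨u, rfl⟩ := hu
      refine main (u⁻¹ : Aˣ) ?_
      rw [← ha', ← mul_assoc, ← map_mul, Units.inv_mul, map_one, one_mul]
    · refine absurd ⟨_, comb a x y x₀ y₀ d c hx₀ hy₀ hxd hyc ha', ?_⟩ hyX
      have : residue A a = 0 := (residue_eq_zero_iff _).2 ((mem_maximalIdeal _).2 hu)
      rw [map_sub, map_mul, ← ResidueField.algebraMap_residue, this, map_zero, zero_mul, sub_zero]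

theorem finrank_residueField_le_finrank_residueSubmodule_add [FiniteDimensional E V]
    [FiniteDimensional (ResidueField A) (ResidueField B)] (n : ℕ) (X : Submodule E V)
    (hX : finrank E V ≤ finrank E X + n) :
    finrank (ResidueField A) (ResidueField B) ≤
      finrank (ResidueField A) (residueSubmodule A B X) + n := by
  induction n generalizing X with
  | zero =>
    have : X = ⊤ := Submodule.eq_top_of_finrank_eq (le_antisymm (Submodule.finrank_le X) hX)
    have h2 : residueSubmodule A B X = ⊤ := by
      rw [eq_top_iff]
      rintro y -
      obtain ⟨b, rfl⟩ := residue_surjective y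
      exact ⟨b, by simp [this], rfl⟩
    rw [h2, finrank_top, add_zero]
  | succ n ih =>
    by_cases htop : X = ⊤
    · refine (ih X ?_).trans (by omega)
      rw [htop, finrank_top]; omega
    obtain ⟨v, -, hv⟩ := SetLike.exists_of_lt (lt_top_iff_ne_top.2 htop)
    have hlt : X < X ⊔ E ∙ v := by
      refine lt_of_le_of_ne le_sup_left fun h => hv ?_
      rw [h]
      exact Submodule.mem_sup_right (Submodule.mem_span_singleton_self v)
    have h1 := Submodule.finrank_lt_finrank_of_lt hlt
    have h2 := ih (X ⊔ E ∙ v) (by omega)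
    obtain ⟨y, hy⟩ := residueSubmodule_sup_span_singleton_le (A := A) (B := B) X v
    have h3 := Submodule.finrank_mono hy
    have h4 := Submodule.finrank_add_le_finrank_add_finrank (residueSubmodule A B X)
      (ResidueField A ∙ y)
    have h5 := finrank_span_le_card (R := ResidueField A) ({y} : Set (ResidueField B))
    rw [Set.toFinset_singleton, Finset.card_singleton] at h5
    omega

end Reduction

section Integers

theorem exists_algebra_padic_of_finiteDimensional (p : ℕ) [Fact p.Prime] (K F : Type*) [Field K]
    [Field F] [Algebra ℚ_[p] K] [FiniteDimensional ℚ_[p] K] [Algebra ℤ_[p] K]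
    [IsScalarTower ℤ_[p] ℚ_[p] K] [Algebra K F] [FiniteDimensional K F] [Algebra ℤ_[p] F]
    [IsScalarTower ℤ_[p] K F] :
    ∃ _ : Algebra ℚ_[p] F, IsScalarTower ℤ_[p] ℚ_[p] F ∧ FiniteDimensional ℚ_[p] F := by
  let : Algebra ℚ_[p] F := ((algebraMap K F).comp (algebraMap ℚ_[p] K)).toAlgebra
  have : IsScalarTower ℚ_[p] K F := .of_algebraMap_eq' rfl
  refine ⟨inferInstance, .of_algebraMap_eq fun x => ?_, FiniteDimensional.trans ℚ_[p] K F⟩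
  rw [IsScalarTower.algebraMap_apply ℤ_[p] K F, IsScalarTower.algebraMap_apply ℤ_[p] ℚ_[p] K,
    IsScalarTower.algebraMap_apply ℚ_[p] K F]

variable (p : ℕ) [Fact p.Prime] (F : Type*) [Field F] [Algebra ℚ_[p] F] [Algebra ℤ_[p] F]
  [IsScalarTower ℤ_[p] ℚ_[p] F]

theorem faithfulSMul_padicInt_field : FaithfulSMul ℤ_[p] F := by
  rw [faithfulSMul_iff_algebraMap_injective, IsScalarTower.algebraMap_eq ℤ_[p] ℚ_[p] F]
  exact (algebraMap ℚ_[p] F).injective.comp (FaithfulSMul.algebraMap_injective ℤ_[p] ℚ_[p])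

theorem faithfulSMul_padicInt_integralClosure :
    FaithfulSMul ℤ_[p] (integralClosure ℤ_[p] F) := by
  have := faithfulSMul_padicInt_field p F
  rw [faithfulSMul_iff_algebraMap_injective]
  refine Function.Injective.of_comp (f := algebraMap (integralClosure ℤ_[p] F) F) ?_
  rw [← RingHom.coe_comp, ← IsScalarTower.algebraMap_eq]
  exact FaithfulSMul.algebraMap_injective ℤ_[p] F

variable [FiniteDimensional ℚ_[p] F]

theorem finite_integralClosure_padicInt : Module.Finite ℤ_[p] (integralClosure ℤ_[p] F) :=
  IsIntegralClosure.finite ℤ_[p] ℚ_[p] F _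

theorem free_integralClosure_padicInt : Module.Free ℤ_[p] (integralClosure ℤ_[p] F) := by
  have := faithfulSMul_padicInt_field p F
  have : IsTorsionFree ℤ_[p] F := Module.isTorsionFree_iff_algebraMap_injective.2
    (FaithfulSMul.algebraMap_injective ℤ_[p] F)
  exact IsIntegralClosure.module_free ℤ_[p] ℚ_[p] F _

theorem isFractionRing_integralClosure_padicInt :
    IsFractionRing (integralClosure ℤ_[p] F) F :=
  IsIntegralClosure.isFractionRing_of_finite_extension ℤ_[p] ℚ_[p] F _

variable [IsLocalRing (integralClosure ℤ_[p] F)]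

theorem isDiscreteValuationRing_integralClosure_padicInt :
    IsDiscreteValuationRing (integralClosure ℤ_[p] F) := by
  have hD : IsDedekindDomain (integralClosure ℤ_[p] F) :=
    integralClosure.isDedekindDomain ℤ_[p] ℚ_[p] F
  have := faithfulSMul_padicInt_integralClosure p F
  refine ((IsDiscreteValuationRing.TFAE (integralClosure ℤ_[p] F) fun h => ?_).out 2 0).1 hD
  exact IsDiscreteValuationRing.not_isField ℤ_[p]
    (isField_of_isIntegral_of_isField (FaithfulSMul.algebraMap_injective _ _) h)

theorem finite_residueField_integralClosure_padicInt :
    Finite (ResidueField (integralClosure ℤ_[p] F)) := by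
  have := finite_integralClosure_padicInt p F
  have := faithfulSMul_padicInt_integralClosure p F
  have : Finite (ResidueField ℤ_[p]) :=
    Finite.of_equiv _ (PadicInt.residueField (p := p)).symm.toEquiv
  exact Module.finite_of_finite (ResidueField ℤ_[p])

end Integers

section Galois

theorem bijective_pow_of_orderOf_eq_card {G : Type*} [Group G] [Finite G] {g : G} {n : ℕ}
    (hg : orderOf g = n) (hG : Nat.card G = n) :
    Function.Bijective fun i : Fin n => g ^ (i : ℕ) := by
  have := Fintype.ofFinite G
  rw [Fintype.bijective_iff_injective_and_card]
  refine ⟨fun i j h => Fin.ext (pow_injOn_Iio_orderOf ?_ ?_ h), ?_⟩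
  · exact hg ▸ i.2
  · exact hg ▸ j.2
  · rw [Fintype.card_fin, Fintype.card_eq_nat_card, hG]

theorem algebraMap_trace_eq_sum_pow_of_orderOf {E V : Type*} [Field E] [Field V] [Algebra E V]
    [FiniteDimensional E V] [IsGalois E V] {n : ℕ} (hn : finrank E V = n) (σ : V ≃ₐ[E] V)
    (hσ : orderOf σ = n) (x : V) :
    algebraMap E V (Algebra.trace E V x) = ∑ i ∈ Finset.range n, (σ ^ i) x := by
  rw [trace_eq_sum_automorphisms, Finset.sum_range]
  exact ((bijective_pow_of_orderOf_eq_card hσ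
    ((IsGalois.card_aut_eq_finrank E V).trans hn)).sum_comp fun g => g x).symm

theorem algebraMap_norm_eq_mul_of_orderOf_eq_two {L V : Type*} [Field L] [Field V] [Algebra L V]
    [FiniteDimensional L V] [IsGalois L V] (hn : finrank L V = 2) (η : V ≃ₐ[L] V)
    (hη : orderOf η = 2) (x : V) :
    algebraMap L V (Algebra.norm L x) = x * η x := by
  rw [Algebra.norm_eq_prod_automorphisms, ← (bijective_pow_of_orderOf_eq_card hη
    ((IsGalois.card_aut_eq_finrank L V).trans hn)).prod_comp fun g => g x]
  simp [Fin.prod_univ_two]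

/-- In a biquadratic situation `k ⊆ L ⊆ V`, an element of `L` of trace zero is negated by any
automorphism over `k` that is not the identity on `L`. -/
theorem map_eq_neg_of_trace_eq_zero {k L V : Type*} [Field k] [Field L] [Field V] [Algebra k L]
    [Algebra L V] [Algebra k V] [IsScalarTower k L V] [FiniteDimensional k L]
    [FiniteDimensional L V] [FiniteDimensional k V] [IsGalois k V] (h2 : (2 : V) ≠ 0)
    (hkL : finrank k L = 2) (hLV : finrank L V = 2) (a b : V ≃ₐ[k] V)
    (ha : a ≠ 1) (hb : b ≠ 1) (hab : a ≠ b) (hbb : b * b = 1)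
    (hfix : ∀ x : L, (b * a) (algebraMap L V x) = algebraMap L V x)
    {x : L} (hx : Algebra.trace k L x = 0) :
    a (algebraMap L V x) = - algebraMap L V x := by
  classical
  have hba1 : b * a ≠ 1 := fun h => hab (mul_left_cancel (h.trans hbb.symm))
  have huniv : (Finset.univ : Finset (V ≃ₐ[k] V)) = {1, a, b, b * a} := by
    symm
    apply Finset.eq_univ_of_card
    rw [Fintype.card_eq_nat_card, IsGalois.card_aut_eq_finrank, ← finrank_mul_finrank k L V,
      hkL, hLV, Finset.card_insert_of_notMem, Finset.card_insert_of_notMem,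
      Finset.card_insert_of_notMem, Finset.card_singleton] <;>
    simp [ha.symm, hb.symm, hab, hba1.symm, ha, hb]
  have h := trace_eq_sum_automorphisms (K := k) (algebraMap L V x)
  have hb' : b (algebraMap L V x) = a (algebraMap L V x) := by
    conv_lhs => rw [← hfix x]
    rw [← AlgEquiv.mul_apply, ← mul_assoc, hbb, one_mul]
  rw [← Algebra.trace_trace (S := L), Algebra.trace_algebraMap, hLV, map_nsmul, hx, huniv,
    Finset.sum_insert, Finset.sum_insert, Finset.sum_insert, Finset.sum_singleton, hfix, hb',
    AlgEquiv.one_apply, smul_zero, map_zero] at h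
  · exact eq_neg_of_add_eq_zero_left (mul_left_cancel₀ h2 (by linear_combination -h))
  all_goals simp [ha.symm, hb.symm, hab, hba1.symm, ha, hb]

end Galois

section Core

variable {B V : Type*} [CommRing B] [IsLocalRing B] [Field V] [Algebra B V]

theorem residue_map_eq_of_forall_algebraMap_eq {D : Type*} [CommRing D] [IsLocalRing D]
    [Algebra D B] [IsLocalHom (algebraMap D B)] [Finite (ResidueField B)]
    (hcard : Nat.card (ResidueField D) = Nat.card (ResidueField B)) (τ : B ≃+* B)
    (hτ : ∀ d, τ (algebraMap D B d) = algebraMap D B d) (b : B) :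
    residue B (τ b) = residue B b := by
  have hinj := (algebraMap (ResidueField D) (ResidueField B)).injective
  have hsurj : Function.Surjective (algebraMap (ResidueField D) (ResidueField B)) :=
    (Nat.bijective_iff_injective_and_card _).2 ⟨hinj, hcard⟩ |>.2
  obtain ⟨c, hc⟩ := hsurj (residue B b)
  obtain ⟨d, rfl⟩ := residue_surjective c
  rw [ResidueField.algebraMap_residue] at hc
  have hm : b - algebraMap D B d ∈ maximalIdeal B := by
    rw [← residue_eq_zero_iff, map_sub, hc, sub_self]
  have hm' : τ (b - algebraMap D B d) ∈ maximalIdeal B := by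
    rw [mem_maximalIdeal, mem_nonunits_iff] at hm ⊢
    rwa [MulEquiv.isUnit_map]
  rw [map_sub, hτ, ← residue_eq_zero_iff, map_sub, sub_eq_zero] at hm'
  rw [hm', hc]

theorem residue_pow_apply_eq_pow (σ : B ≃+* B) {q : ℕ}
    (hσ : ∀ b, residue B (σ b) = residue B b ^ q) (i : ℕ) (b : B) :
    residue B ((σ ^ i) b) = residue B b ^ q ^ i := by
  induction i with
  | zero => simp
  | succ i ih => rw [pow_succ', RingAut.mul_apply, hσ, ih, ← pow_mul, ← pow_succ]

/-- The form `Tr (x * η y)` is too nondegenerate modulo the maximal ideal to have a totally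
isotropic subspace of half the dimension. -/
theorem not_forall_trace_mul_eq_zero {A E : Type*} [CommRing A] [IsDomain A] [ValuationRing A]
    [Algebra A B] [IsLocalHom (algebraMap A B)] [Field E] [Algebra A E] [IsFractionRing A E]
    [Algebra E V] [Algebra A V] [IsScalarTower A E V] [IsScalarTower A B V] [FaithfulSMul B V]
    [Finite (ResidueField B)] [FiniteDimensional E V] [IsGalois E V] {r : ℕ} (hr : 1 ≤ r)
    (h2 : (2 : ResidueField B) ≠ 0) (hEV : finrank E V = 2 * r)
    (hk : finrank (ResidueField A) (ResidueField B) = 2 * r)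
    (σ : V ≃ₐ[E] V) (hσ : orderOf σ = 2 * r) (σB ηB : B ≃+* B)
    (hσB : ∀ b, algebraMap B V (σB b) = σ (algebraMap B V b))
    (hσres : ∀ b, residue B (σB b) = residue B b ^ Nat.card (ResidueField A))
    (hηres : ∀ b, residue B (ηB b) = residue B b ^ Nat.card (ResidueField A) ^ r)
    (η : V → V) (hηB : ∀ b, algebraMap B V (ηB b) = η (algebraMap B V b))
    (X : Submodule E V) (hX : finrank E X = r) :
    ¬ ∀ x ∈ X, ∀ y ∈ X, Algebra.trace E V (x * η y) = 0 := by
  intro h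
  have hfd : FiniteDimensional (ResidueField A) (ResidueField B) :=
    .of_finrank_pos (by omega)
  have hdim := finrank_residueField_le_finrank_residueSubmodule_add (A := A) (B := B) r X
    (by omega)
  refine absurd (finrank_lt_of_trace_mul_pow_eq_zero hr h2 hk (residueSubmodule A B X) ?_)
    (by omega)
  rintro _ ⟨b, hb, rfl⟩ _ ⟨c, hc, rfl⟩
  have hpow : ∀ (i : ℕ) (b : B), algebraMap B V ((σB ^ i) b) = (σ ^ i) (algebraMap B V b) := by
    intro i b
    induction i with
    | zero => simp
    | succ i ih =>
      rw [pow_succ', pow_succ', RingAut.mul_apply, AlgEquiv.mul_apply, hσB, ih]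
  have hsum : ∑ i ∈ Finset.range (2 * r), (σB ^ i) (b * ηB c) = 0 := by
    apply FaithfulSMul.algebraMap_injective B V
    rw [map_sum, map_zero, ← map_zero (algebraMap E V), ← h _ hb _ hc,
      algebraMap_trace_eq_sum_pow_of_orderOf hEV σ hσ]
    simp only [hpow, map_mul, hηB]
  have hfinA : Finite (ResidueField A) :=
    Finite.of_injective _ (algebraMap (ResidueField A) (ResidueField B)).injective
  apply (algebraMap (ResidueField A) (ResidueField B)).injective
  have := congrArg (residue B) hsum
  rw [map_sum, map_zero] at this
  rw [map_zero, FiniteField.algebraMap_trace_eq_sum_pow, hk, ← this]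
  refine Finset.sum_congr rfl fun i _ => ?_
  rw [residue_pow_apply_eq_pow σB hσres, map_mul, hηres]

/-- Units are norms from an unramified quadratic extension of odd residue characteristic. -/
theorem exists_norm_eq_algebraMap_unit {C L : Type*} [CommRing C] [IsDomain C] [IsLocalRing C]
    [IsIntegrallyClosed C] [Algebra C B] [IsLocalHom (algebraMap C B)] [Algebra.IsIntegral C B]
    [Field L] [Algebra C L] [IsFractionRing C L] [Algebra L V] [Algebra C V]
    [IsScalarTower C L V] [IsScalarTower C B V] [FaithfulSMul B V] [Finite (ResidueField B)]
    [FiniteDimensional L V] [IsGalois L V]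
    (hsq : ∀ u : C, u - 1 ∈ maximalIdeal C → IsSquare u) (hLV : finrank L V = 2)
    (hk : finrank (ResidueField C) (ResidueField B) = 2) (η : V ≃ₐ[L] V) (hη : orderOf η = 2)
    (ηB : B ≃+* B) (hηB : ∀ b, algebraMap B V (ηB b) = η (algebraMap B V b))
    (hηres : ∀ b, residue B (ηB b) = residue B b ^ Nat.card (ResidueField C)) (u : Cˣ) :
    ∃ z : V, z ≠ 0 ∧ Algebra.norm L z = algebraMap C L u := by
  have hfinC : Finite (ResidueField C) :=
    Finite.of_injective _ (algebraMap (ResidueField C) (ResidueField B)).injective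
  obtain ⟨ζ, hζ⟩ := FiniteField.norm_surjective (ResidueField C) (ResidueField B) (residue C u)
  obtain ⟨b, rfl⟩ := residue_surjective ζ
  obtain ⟨n, hn : algebraMap C L n = Algebra.norm L (algebraMap B V b)⟩ :=
    IsIntegrallyClosed.isIntegral_iff.1 <| Algebra.isIntegral_norm L <|
      (Algebra.IsIntegral.isIntegral (R := C) b).map (IsScalarTower.toAlgHom C B V)
  have hnB : algebraMap C B n = b * ηB b := by
    apply FaithfulSMul.algebraMap_injective B V
    rw [← IsScalarTower.algebraMap_apply, IsScalarTower.algebraMap_apply C L V, hn, map_mul, hηB,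
      algebraMap_norm_eq_mul_of_orderOf_eq_two hLV η hη]
  have hres : residue C n = residue C u := by
    apply (algebraMap (ResidueField C) (ResidueField B)).injective
    rw [← hζ, FiniteField.algebraMap_norm_eq_pow_sum, hk, ResidueField.algebraMap_residue, hnB,
      map_mul, hηres]
    simp [Finset.sum_range_succ, pow_add]
  have hnu : IsUnit n := by
    by_contra hnu
    rw [(residue_eq_zero_iff n).2 hnu] at hres
    exact (residue_eq_zero_iff (u : C)).1 hres.symm u.isUnit
  obtain ⟨n, rfl⟩ := hnu
  obtain ⟨v, hv⟩ := hsq (u * (n⁻¹ : Cˣ)) (by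
    rw [← residue_eq_zero_iff, map_sub, map_mul, ← hres, ← map_mul]
    simp)
  have hnorm : Algebra.norm L (algebraMap B V b * algebraMap L V (algebraMap C L v)) =
      algebraMap C L u := by
    rw [map_mul, Algebra.norm_algebraMap, hLV, ← hn, ← map_pow, ← map_mul, sq, ← hv, mul_comm,
      Units.inv_mul_cancel_right]
  refine ⟨_, fun h => ?_, hnorm⟩
  rw [h, Algebra.norm_zero, eq_comm, IsFractionRing.to_map_eq_zero_iff] at hnorm
  exact u.ne_zero hnorm

end Core

section Tower

theorem exists_algEquiv_eq_of_forall_algebraMap_eq {K F V : Type*} [Field K] [Field F] [Field V]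
    [Algebra K F] [Algebra K V] [Algebra F V] [IsScalarTower K F V] (g : V ≃ₐ[K] V)
    (hg : ∀ x, g (algebraMap F V x) = algebraMap F V x) :
    ∃ g' : V ≃ₐ[F] V, (∀ x, g' x = g x) ∧ orderOf g' = orderOf g := by
  let g' : V ≃ₐ[F] V := { g with commutes' := hg }
  refine ⟨g', fun x => rfl, ?_⟩
  have h : AlgEquiv.restrictScalarsHom K g' = g := rfl
  rw [← h]
  exact (orderOf_injective _ (AlgEquiv.restrictScalars_injective K) g').symm

theorem exists_finrank_eq_forall_trace_eq_zero {E V : Type*} [Field E] [Field V] [Algebra E V]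
    [FiniteDimensional E V] [IsGalois E V] {r : ℕ} (hr : 1 ≤ r) (hEV : finrank E V = 2 * r)
    (σ : V ≃ₐ[E] V) (hσ : orderOf σ = 2 * r) (η : V →+* V)
    (hη : ∀ x, η ((σ ^ r) x) = (σ ^ r) (η x)) {z π : V} (hz : z ≠ 0) (hπ : (σ ^ r) π = -π) :
    ∃ X : Submodule E V, finrank E X = r ∧
      ∀ x ∈ X, ∀ y ∈ X, Algebra.trace E V (z * η z / π * x * η y) = 0 := by
  let F := IntermediateField.fixedField (Subgroup.zpowers (σ ^ r))
  have hF : finrank E F = r := by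
    have h1 : finrank F V = 2 := by
      rw [IntermediateField.finrank_fixedField_eq_card, Nat.card_zpowers, orderOf_pow, hσ,
        Nat.gcd_eq_right (Dvd.intro_left 2 rfl), Nat.mul_div_cancel _ hr]
    have h2 := finrank_mul_finrank E F V
    rw [h1, hEV] at h2
    omega
  have hinj : Function.Injective (LinearMap.mulLeft E z⁻¹ : V →ₗ[E] V) :=
    mul_right_injective₀ (inv_ne_zero hz)
  refine ⟨(Subalgebra.toSubmodule F.toSubalgebra).map (LinearMap.mulLeft E z⁻¹), ?_, ?_⟩
  · rw [← hF]
    exact (Submodule.equivMapOfInjective _ hinj _).finrank_eq.symm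
  rintro _ ⟨x, hx, rfl⟩ _ ⟨y, hy, rfl⟩
  have hfix : ∀ x ∈ Subalgebra.toSubmodule F.toSubalgebra, (σ ^ r) x = x := fun x hx =>
    (IntermediateField.mem_fixedField_iff _ x).1 hx _ (Subgroup.mem_zpowers _)
  have hw : z * η z / π * (LinearMap.mulLeft E z⁻¹ x) * η (LinearMap.mulLeft E z⁻¹ y) =
      x * η y / π := by
    have : η z ≠ 0 := (map_ne_zero η).2 hz
    rw [LinearMap.mulLeft_apply, LinearMap.mulLeft_apply, map_mul, map_inv₀]
    field_simp
  have hneg : (σ ^ r) (x * η y / π) = -(x * η y / π) := by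
    rw [map_div₀, map_mul, ← hη, hfix x hx, hfix y hy, hπ, div_neg]
  apply (algebraMap E V).injective
  rw [hw, algebraMap_trace_eq_sum_pow_of_orderOf hEV σ hσ, two_mul, Finset.sum_range_add,
    ← Finset.sum_add_distrib, map_zero]
  refine Finset.sum_eq_zero fun i _ => ?_
  rw [add_comm r, pow_add, AlgEquiv.mul_apply, hneg, map_neg, add_neg_cancel]

end Tower

section IntegralClosure

variable {R F V : Type*} [CommRing R] [Field F] [Field V] [Algebra R F] [Algebra R V]
  [Algebra F V] [IsScalarTower R F V]

/-- The inclusion between the integral closures of `R` in two fields `F ⊆ V`. -/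
abbrev integralClosureAlgebra : Algebra (integralClosure R F) (integralClosure R V) :=
  (IsScalarTower.toAlgHom R F V).mapIntegralClosure.toRingHom.toAlgebra

attribute [local instance] integralClosureAlgebra

theorem isScalarTower_integralClosure :
    IsScalarTower (integralClosure R F) (integralClosure R V) V :=
  .of_algebraMap_eq fun _ => rfl

theorem isIntegral_integralClosure :
    Algebra.IsIntegral (integralClosure R F) (integralClosure R V) :=
  have : IsScalarTower R (integralClosure R F) (integralClosure R V) :=
    .of_algebraMap_eq fun x => Subtype.ext (IsScalarTower.algebraMap_apply R F V x)
  Algebra.IsIntegral.tower_top R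

theorem isLocalHom_integralClosure :
    IsLocalHom (algebraMap (integralClosure R F) (integralClosure R V)) :=
  have := isIntegral_integralClosure (R := R) (F := F) (V := V)
  have : FaithfulSMul (integralClosure R F) (integralClosure R V) :=
    (faithfulSMul_iff_algebraMap_injective _ _).2 fun _ _ h =>
      Subtype.ext ((algebraMap F V).injective (congrArg Subtype.val h))
  Algebra.IsIntegral.isLocalHom _ _

end IntegralClosure

theorem finrank_eq_of_natCard_eq_pow {k F : Type*} [Field k] [Field F] [Algebra k F] [Finite F]
    {n : ℕ} (h : Nat.card F = Nat.card k ^ n) : finrank k F = n := by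
  have : Finite k := Finite.of_injective _ (algebraMap k F).injective
  have := Module.natCard_eq_pow_finrank (K := k) (V := F)
  exact Nat.pow_right_injective Finite.one_lt_card (this.symm.trans h)

theorem exists_norm_eq_or_exists_norm_eq_div {C L V : Type*} [CommRing C] [IsDomain C]
    [IsDiscreteValuationRing C] [Field L] [Algebra C L] [IsFractionRing C L] [Field V]
    [Algebra L V] (hLV : finrank L V = 2)
    (hunit : ∀ u : Cˣ, ∃ z : V, z ≠ 0 ∧ Algebra.norm L z = algebraMap C L u) {π : C}
    (hπ : Irreducible π) {κ : L} (hκ : κ ≠ 0) :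
    (∃ z : V, z ≠ 0 ∧ Algebra.norm L z = κ) ∨
      ∃ z : V, z ≠ 0 ∧ Algebra.norm L z = κ / algebraMap C L π := by
  obtain ⟨n, u, hu⟩ := IsDiscreteValuationRing.exists_units_eq_smul_zpow_of_irreducible hπ hκ
  obtain ⟨z, hz, hzu⟩ := hunit u
  have hπ0 : algebraMap C L π ≠ 0 := by
    rw [Ne, IsFractionRing.to_map_eq_zero_iff]
    exact hπ.ne_zero
  have key : ∀ m : ℤ, ∃ w : V, w ≠ 0 ∧
      Algebra.norm L w = algebraMap C L u * algebraMap C L π ^ (m + m) := fun m => by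
    refine ⟨z * algebraMap L V (algebraMap C L π ^ m), mul_ne_zero hz ?_, ?_⟩
    · exact (map_ne_zero _).2 (zpow_ne_zero _ hπ0)
    · rw [map_mul, Algebra.norm_algebraMap, hLV, hzu, zpow_add₀ hπ0, sq]
  rw [Units.smul_def, Algebra.smul_def] at hu
  rcases Int.even_or_odd' n with ⟨m, rfl | rfl⟩
  · left
    rw [hu, two_mul]
    exact key m
  · right
    rw [hu, zpow_add_one₀ hπ0, two_mul, ← mul_assoc, mul_div_cancel_right₀ _ hπ0]
    exact key m

theorem not_mem_zpowers_of_closure_pair_eq_top {G : Type*} [Group G] {a b : G}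
    (hab : Subgroup.closure {a, b} = ⊤) (hG : orderOf a ≠ Nat.card G) :
    b ∉ Subgroup.zpowers a := by
  intro hb
  refine hG ?_
  rw [← Nat.card_zpowers, ← Subgroup.card_top (G := G), ← hab]
  have : Subgroup.closure {a, b} = Subgroup.zpowers a := by
    refine le_antisymm ((Subgroup.closure_le _).2 ?_) ?_
    · rintro _ (rfl | rfl)
      exacts [Subgroup.mem_zpowers _, hb]
    · rw [Subgroup.zpowers_le]
      exact Subgroup.subset_closure (Set.mem_insert _ _)
  rw [this]

end

/-- Let `p` be an odd prime, `K/ℚ_p` finite with residue cardinality `q`,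
`E/K` totally ramified quadratic, `K_s/K` unramified of degree `s = 2r`, `E_s = E·K_s`, with
`Gal(E_s/K) ≅ ℤ/s × ℤ/2` generated by the Frobenius lift `σ` (fixing `E`, inducing `x ↦ x^q`
on the residue field) and `τ` (nontrivial, fixing `K_s`).  Let `L` be the fixed field of
`η = τσ^r` (a ramified quadratic extension of the unramified subfield `K_r`), `π_L` a
uniformizer of `L` with `Tr_{L/K_r}(π_L) = 0`, and `κ ∈ L^×`.  Then the Hermitian form
`φ_κ(x, y) = Tr_{E_s/E}((κ/π_L)·x·η(y))` on the `s`-dimensional `E`-vector space `E_s` admits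
a totally isotropic `E`-subspace of dimension `r` if and only if `κ ∈ Nm_{E_s/L}(E_s^×)`. -/
theorem stmt_10 (p : ℕ) [Fact p.Prime] (hp : p ≠ 2)
    (q r s : ℕ) (hr : 1 ≤ r) (hs : s = 2 * r)
    (K E Kr Ks L Es : Type*)
    [Field K] [Field E] [Field Kr] [Field Ks] [Field L] [Field Es]
    -- p-adic structure on all the fields, with `K/ℚ_p` finite
    [Algebra ℚ_[p] K] [FiniteDimensional ℚ_[p] K]
    [Algebra ℤ_[p] K] [Algebra ℤ_[p] E] [Algebra ℤ_[p] Kr] [Algebra ℤ_[p] Ks]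
    [Algebra ℤ_[p] L] [Algebra ℤ_[p] Es]
    [IsScalarTower ℤ_[p] ℚ_[p] K]
    -- the lattice of fields K ⊆ E, Kr, Ks, L ⊆ Es
    [Algebra K E] [Algebra K Kr] [Algebra K Ks] [Algebra K L] [Algebra K Es]
    [Algebra Kr Ks] [Algebra Kr L] [Algebra Kr Es]
    [Algebra E Es] [Algebra Ks Es] [Algebra L Es]
    [IsScalarTower K Kr Ks] [IsScalarTower K Kr L] [IsScalarTower K Kr Es]
    [IsScalarTower K E Es] [IsScalarTower K Ks Es] [IsScalarTower K L Es]
    [IsScalarTower Kr Ks Es] [IsScalarTower Kr L Es]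
    [IsScalarTower ℤ_[p] K E] [IsScalarTower ℤ_[p] K Kr] [IsScalarTower ℤ_[p] K Ks]
    [IsScalarTower ℤ_[p] K L] [IsScalarTower ℤ_[p] K Es]
    -- the rings of integers are local rings
    [IsLocalRing (integralClosure ℤ_[p] K)] [IsLocalRing (integralClosure ℤ_[p] E)]
    [IsLocalRing (integralClosure ℤ_[p] Kr)] [IsLocalRing (integralClosure ℤ_[p] Ks)]
    [IsLocalRing (integralClosure ℤ_[p] L)] [IsLocalRing (integralClosure ℤ_[p] Es)]
    -- degrees of the extensions
    (hKE : Module.finrank K E = 2) (hKKr : Module.finrank K Kr = r)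
    (hKKs : Module.finrank K Ks = s) (hKrL : Module.finrank Kr L = 2)
    (hLEs : Module.finrank L Es = 2) (hEEs : Module.finrank E Es = s)
    (hKEs : Module.finrank K Es = 2 * s)
    -- residue cardinalities: `E/K` totally ramified, `Kr, Ks` unramified over `K`,
    -- `L/Kr` ramified quadratic
    (hqK : Nat.card (ResidueField (integralClosure ℤ_[p] K)) = q)
    (hqE : Nat.card (ResidueField (integralClosure ℤ_[p] E)) = q)
    (hqKr : Nat.card (ResidueField (integralClosure ℤ_[p] Kr)) = q ^ r)
    (hqKs : Nat.card (ResidueField (integralClosure ℤ_[p] Ks)) = q ^ s)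
    (hqL : Nat.card (ResidueField (integralClosure ℤ_[p] L)) = q ^ r)
    (hqEs : Nat.card (ResidueField (integralClosure ℤ_[p] Es)) = q ^ s)
    -- `Es` is the compositum `E · Ks`
    (hcomp : (IsScalarTower.toAlgHom K E Es).range ⊔ (IsScalarTower.toAlgHom K Ks Es).range
      = ⊤)
    -- Galois structure: `Gal(Es/K) = ⟨σ⟩ × ⟨τ⟩ ≅ ℤ/s × ℤ/2`
    [IsGalois K Es]
    (σ τ : Es ≃ₐ[K] Es)
    (hσord : orderOf σ = s) (hτord : orderOf τ = 2) (hcomm : σ * τ = τ * σ)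
    (hgen : Subgroup.closure ({σ, τ} : Set (Es ≃ₐ[K] Es)) = ⊤)
    (hσE : ∀ x : E, σ (algebraMap E Es x) = algebraMap E Es x)
    (hτKs : ∀ x : Ks, τ (algebraMap Ks Es x) = algebraMap Ks Es x)
    -- `σ` induces the `q`-power Frobenius on the residue field
    (hσint : ∀ x ∈ integralClosure ℤ_[p] Es, σ x ∈ integralClosure ℤ_[p] Es)
    (hσfrob : ∀ x : integralClosure ℤ_[p] Es,
      ((⟨σ (x : Es), hσint (x : Es) x.2⟩ : integralClosure ℤ_[p] Es) - x ^ q) ∈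
        maximalIdeal (integralClosure ℤ_[p] Es))
    -- `L` is the fixed field of `η = τ σ^r`
    (hL : ∀ x : Es, (τ * σ ^ r) x = x ↔ x ∈ Set.range (algebraMap L Es))
    -- a uniformizer `π_L` of `L` with `Tr_{L/Kr}(π_L) = 0`
    (πL : L) (hπLmem : πL ∈ integralClosure ℤ_[p] L)
    (hπL : maximalIdeal (integralClosure ℤ_[p] L) =
      Ideal.span {(⟨πL, hπLmem⟩ : integralClosure ℤ_[p] L)})
    (hπLtr : Algebra.trace Kr L πL = 0)
    (κ : L) (hκ : κ ≠ 0) :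
    (∃ X : Submodule E Es, Module.finrank E ↥X = r ∧
        ∀ x ∈ X, ∀ y ∈ X,
          Algebra.trace E Es (algebraMap L Es (κ / πL) * x * (τ * σ ^ r) y) = 0) ↔
      ∃ z : Es, z ≠ 0 ∧ Algebra.norm L z = κ := by
  subst hs
  have hfdKEs : FiniteDimensional K Es := .of_finrank_pos (by omega)
  have hfdKE : FiniteDimensional K E := .of_finrank_pos (by omega)
  have hfdKL : FiniteDimensional K L := .of_injective
    (IsScalarTower.toAlgHom K L Es).toLinearMap (algebraMap L Es).injective
  have hfdEEs : FiniteDimensional E Es := .of_finrank_pos (by omega)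
  have hfdLEs : FiniteDimensional L Es := .of_finrank_pos (by omega)
  have hfdKrL : FiniteDimensional Kr L := .of_finrank_pos (by omega)
  have hfdKrEs : FiniteDimensional Kr Es := .right K Kr Es
  have hgalE : IsGalois E Es := .tower_top_of_isGalois K E Es
  have hgalL : IsGalois L Es := .tower_top_of_isGalois K L Es
  have hgalKr : IsGalois Kr Es := .tower_top_of_isGalois K Kr Es
  -- the elements of the Galois group
  have hτσ : τ ∉ Subgroup.zpowers σ := not_mem_zpowers_of_closure_pair_eq_top hgen (by
    rw [IsGalois.card_aut_eq_finrank, hσord, hKEs]; omega)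
  have hρτ : σ ^ r ≠ τ := fun h => hτσ (h ▸ Subgroup.npow_mem_zpowers σ r)
  have hρ1 : σ ^ r ≠ 1 := pow_ne_one_of_lt_orderOf (by omega) (by omega)
  have hρρ : σ ^ r * σ ^ r = 1 := by rw [← pow_add, ← two_mul, ← hσord, pow_orderOf_eq_one]
  have hττ : τ * τ = 1 := by rw [← sq, ← hτord, pow_orderOf_eq_one]
  have hτ1 : τ ≠ 1 := by
    rintro rfl
    simp at hτord
  have hρcomm : σ ^ r * τ = τ * σ ^ r := (show Commute σ τ from hcomm).pow_left r
  have hηord : orderOf (τ * σ ^ r) = 2 := by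
    refine orderOf_eq_prime ?_ fun h => hρτ (mul_left_cancel (h.trans hττ.symm))
    rw [sq, mul_assoc, ← mul_assoc (σ ^ r), hρcomm, mul_assoc τ, hρρ, mul_one, hττ]
  have hηL : ∀ x : L, (τ * σ ^ r) (algebraMap L Es x) = algebraMap L Es x := fun x =>
    (hL _).2 ⟨x, rfl⟩
  obtain ⟨σE, hσE', hσEord⟩ := exists_algEquiv_eq_of_forall_algebraMap_eq σ hσE
  obtain ⟨ηL, hηL', hηLord⟩ := exists_algEquiv_eq_of_forall_algebraMap_eq (τ * σ ^ r) hηL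
  rw [hσord] at hσEord
  rw [hηord] at hηLord
  have hσEpow : ∀ (i : ℕ) (x : Es), (σE ^ i) x = (σ ^ i) x := by
    intro i x
    induction i with
    | zero => simp
    | succ i ih => rw [pow_succ', pow_succ', AlgEquiv.mul_apply, AlgEquiv.mul_apply, hσE', ih]
  have h2 : (2 : Es) ≠ 0 := (isUnit_two_of_algebra_padicInt (p := p) hp).ne_zero
  have hπ : (σ ^ r) (algebraMap L Es πL) = -algebraMap L Es πL := by
    have hτKr : ∀ x : Kr, τ (algebraMap Kr Es x) = algebraMap Kr Es x := fun x => by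
      rw [IsScalarTower.algebraMap_apply Kr Ks Es, hτKs]
    have hρKr : ∀ x : Kr, (σ ^ r) (algebraMap Kr Es x) = algebraMap Kr Es x := fun x => by
      apply τ.injective
      rw [hτKr, ← AlgEquiv.mul_apply, IsScalarTower.algebraMap_apply Kr L Es, hηL]
    obtain ⟨a, ha, haord⟩ := exists_algEquiv_eq_of_forall_algebraMap_eq (σ ^ r) hρKr
    obtain ⟨b, hb, hbord⟩ := exists_algEquiv_eq_of_forall_algebraMap_eq τ hτKr
    rw [← ha]
    refine map_eq_neg_of_trace_eq_zero h2 hKrL hLEs a b ?_ ?_ ?_ ?_ (fun x => ?_) hπLtr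
    · rintro rfl
      rw [orderOf_one] at haord
      exact hρ1 (orderOf_eq_one_iff.1 haord.symm)
    · rintro rfl
      rw [orderOf_one] at hbord
      exact hτ1 (orderOf_eq_one_iff.1 hbord.symm)
    · rintro rfl
      exact hρτ (AlgEquiv.ext fun x => (ha x).symm.trans (hb x))
    · rw [← sq, ← hτord, ← hbord, pow_orderOf_eq_one]
    · rw [AlgEquiv.mul_apply, ha, hb]
      exact hηL x
  constructor
  swap
  · rintro ⟨z, hz, rfl⟩
    have := exists_finrank_eq_forall_trace_eq_zero hr hEEs σE hσEord (ηL : Es →+* Es)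
      (fun x => ?_) hz ((hσEpow r _).trans hπ)
    · simpa only [map_div₀, algebraMap_norm_eq_mul_of_orderOf_eq_two hLEs ηL hηLord,
        RingHom.coe_coe, hηL'] using this
    · simp only [RingHom.coe_coe, hηL', hσEpow, ← AlgEquiv.mul_apply]
      rw [mul_assoc, ← mul_assoc (σ ^ r) τ, hρcomm, mul_assoc]
  rintro ⟨X, hX, hiso⟩
  have : IsScalarTower ℤ_[p] E Es := .of_algebraMap_eq fun x => by
    rw [IsScalarTower.algebraMap_apply ℤ_[p] K Es, IsScalarTower.algebraMap_apply K E Es,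
      IsScalarTower.algebraMap_apply ℤ_[p] K E]
  have : IsScalarTower ℤ_[p] Ks Es := .of_algebraMap_eq fun x => by
    rw [IsScalarTower.algebraMap_apply ℤ_[p] K Es, IsScalarTower.algebraMap_apply K Ks Es,
      IsScalarTower.algebraMap_apply ℤ_[p] K Ks]
  have : IsScalarTower ℤ_[p] L Es := .of_algebraMap_eq fun x => by
    rw [IsScalarTower.algebraMap_apply ℤ_[p] K Es, IsScalarTower.algebraMap_apply K L Es,
      IsScalarTower.algebraMap_apply ℤ_[p] K L]
  obtain ⟨_, _, _⟩ := exists_algebra_padic_of_finiteDimensional p K E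
  obtain ⟨_, _, _⟩ := exists_algebra_padic_of_finiteDimensional p K L
  obtain ⟨_, _, _⟩ := exists_algebra_padic_of_finiteDimensional p K Es
  have := isDiscreteValuationRing_integralClosure_padicInt p E
  have := isDiscreteValuationRing_integralClosure_padicInt p L
  have := isFractionRing_integralClosure_padicInt p E
  have := isFractionRing_integralClosure_padicInt p L
  have := finite_integralClosure_padicInt p L
  have := free_integralClosure_padicInt p L
  have := finite_residueField_integralClosure_padicInt p Es
  let := integralClosureAlgebra (R := ℤ_[p]) (F := E) (V := Es)
  let := integralClosureAlgebra (R := ℤ_[p]) (F := L) (V := Es)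
  let := integralClosureAlgebra (R := ℤ_[p]) (F := Ks) (V := Es)
  have := isScalarTower_integralClosure (R := ℤ_[p]) (F := E) (V := Es)
  have := isScalarTower_integralClosure (R := ℤ_[p]) (F := L) (V := Es)
  have := isLocalHom_integralClosure (R := ℤ_[p]) (F := E) (V := Es)
  have := isLocalHom_integralClosure (R := ℤ_[p]) (F := L) (V := Es)
  have := isLocalHom_integralClosure (R := ℤ_[p]) (F := Ks) (V := Es)
  have := isIntegral_integralClosure (R := ℤ_[p]) (F := L) (V := Es)
  -- the actions on the ring of integers of `Es` and on its residue field
  let σB : integralClosure ℤ_[p] Es ≃+* integralClosure ℤ_[p] Es :=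
    ((σ.restrictScalars ℤ_[p]).mapIntegralClosure).toRingEquiv
  let τB : integralClosure ℤ_[p] Es ≃+* integralClosure ℤ_[p] Es :=
    ((τ.restrictScalars ℤ_[p]).mapIntegralClosure).toRingEquiv
  have hσres : ∀ b, residue _ (σB b) = residue _ b ^ q := fun b => by
    rw [← map_pow, ← sub_eq_zero, ← map_sub, residue_eq_zero_iff]
    exact hσfrob b
  have hτres : ∀ b, residue _ (τB b) = residue _ b :=
    residue_map_eq_of_forall_algebraMap_eq (D := integralClosure ℤ_[p] Ks)
      (hqKs.trans hqEs.symm) τB fun d => Subtype.ext (hτKs d)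
  have hηres : ∀ b, residue _ ((τB * σB ^ r) b) = residue _ b ^ q ^ r := fun b => by
    rw [RingAut.mul_apply, hτres, residue_pow_apply_eq_pow σB hσres]
  have hσBpow : ∀ (i : ℕ) (b : integralClosure ℤ_[p] Es), ((σB ^ i) b : Es) = (σ ^ i) b := by
    intro i b
    induction i with
    | zero => rfl
    | succ i ih =>
      rw [pow_succ', pow_succ', RingAut.mul_apply, AlgEquiv.mul_apply, ← ih]
      rfl
  have hηB : ∀ b : integralClosure ℤ_[p] Es, ((τB * σB ^ r) b : Es) = (τ * σ ^ r) b := fun b => by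
    rw [AlgEquiv.mul_apply, ← hσBpow]
    rfl
  have hunit := exists_norm_eq_algebraMap_unit (C := integralClosure ℤ_[p] L) (L := L)
    (B := integralClosure ℤ_[p] Es) (V := Es)
    (fun u hu => isSquare_of_sub_one_mem_maximalIdeal (p := p) hp hu) hLEs
    (finrank_eq_of_natCard_eq_pow (by rw [hqEs, hqL, ← pow_mul, mul_comm]))
    ηL hηLord (τB * σB ^ r) (fun b => (hηB b).trans (hηL' b).symm) (by rwa [hqL])
  have hirr : Irreducible (⟨πL, hπLmem⟩ : integralClosure ℤ_[p] L) :=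
    (IsDiscreteValuationRing.irreducible_iff_uniformizer _).2 hπL
  refine (exists_norm_eq_or_exists_norm_eq_div hLEs hunit hirr hκ).resolve_right ?_
  rintro ⟨w, hw, hwκ : Algebra.norm L w = κ / πL⟩
  have hinj : Function.Injective (LinearMap.mulLeft E w : Es →ₗ[E] Es) := mul_right_injective₀ hw
  refine not_forall_trace_mul_eq_zero (A := integralClosure ℤ_[p] E)
    (B := integralClosure ℤ_[p] Es) hr ((isUnit_two_of_algebra_padicInt (p := p) hp).map
      (residue (integralClosure ℤ_[p] Es))).ne_zero
    hEEs (finrank_eq_of_natCard_eq_pow (by rw [hqEs, hqE])) σE hσEord σB (τB * σB ^ r)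
    (fun b => (hσE' b).symm) (by rwa [hqE]) (by rwa [hqE]) ⇑(τ * σ ^ r) hηB
    (X.map (LinearMap.mulLeft E w))
    ((Submodule.equivMapOfInjective _ hinj X).finrank_eq.symm.trans hX) ?_
  rintro _ ⟨x, hx, rfl⟩ _ ⟨y, hy, rfl⟩
  rw [← hiso x hx y hy]
  congr 1
  have := algebraMap_norm_eq_mul_of_orderOf_eq_two hLEs ηL hηLord w
  rw [hwκ, hηL'] at this
  rw [LinearMap.mulLeft_apply, LinearMap.mulLeft_apply, map_mul]
  linear_combination -(x * (τ * σ ^ r) y) * this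
end

section
/- Let p be a prime, E a finite extension of ℚ_p with residue field of cardinality q, and M/E an unramified extension of degree 2r (r ≥ 1), so the residue field of M has cardinality q^{2r}. Then the O_E-submodule of O_M generated by the set μ = {α ∈ M : α^{q^r+1} = 1} of roots of unity of order dividing q^r + 1 is all of O_M. -/
open IsLocalRing

/-- A finite module over a Noetherian local ring that is complete is itself complete. -/
theorem IsAdicComplete.of_finite_of_isNoetherianRing {R M : Type*} [CommRing R]
    [IsLocalRing R] [IsNoetherianRing R] [IsAdicComplete (maximalIdeal R) R]
    [AddCommGroup M] [Module R M] [Module.Finite R M] :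
    IsAdicComplete (maximalIdeal R) M := by
  have hH : IsHausdorff (maximalIdeal R) M :=
    IsHausdorff.of_le_jacobson _ _ (maximalIdeal_le_jacobson _)
  have hP : IsPrecomplete (maximalIdeal R) M := by
    rw [← AdicCompletion.of_surjective_iff]
    intro y
    obtain ⟨t, rfl⟩ := AdicCompletion.ofTensorProduct_surjective_of_finite (maximalIdeal R) M y
    induction t with
    | zero => exact ⟨0, by simp⟩
    | add a b ha hb =>
      obtain ⟨x, hx⟩ := ha
      obtain ⟨y, hy⟩ := hb
      exact ⟨x + y, by simp [hx, hy]⟩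
    | tmul a m =>
      obtain ⟨c, rfl⟩ := AdicCompletion.of_surjective (maximalIdeal R) R a
      refine ⟨c • m, ?_⟩
      rw [AdicCompletion.ofTensorProduct_tmul, map_smul]
      ext n
      rfl
  exact { hH, hP with }

theorem pow_pow_sub_one_mem_pow {R : Type*} [CommRing R] {I : Ideal R} {Q : ℕ}
    (hQ : (Q : R) ∈ I) {x : R} (hx : x - 1 ∈ I) (k : ℕ) : x ^ Q ^ k - 1 ∈ I ^ (k + 1) := by
  induction k with
  | zero => simpa using hx
  | succ k ih =>
    rw [pow_succ Q, pow_mul, ← geom_sum_mul, mul_comm, pow_succ I (k + 1)]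
    refine Ideal.mul_mem_mul ih ?_
    have h1 : Ideal.Quotient.mk I (x ^ Q ^ k) = 1 := by
      rw [← map_one (Ideal.Quotient.mk I), Ideal.Quotient.eq]
      exact Ideal.pow_le_self (Nat.succ_ne_zero k) ih
    rw [← Ideal.Quotient.eq_zero_iff_mem] at hQ ⊢
    rw [map_sum]
    simp only [map_pow] at h1 ⊢
    simpa [h1] using hQ

/-- Roots of unity of order prime to the residue characteristic lift from the residue field. -/
theorem exists_pow_eq_one_residue_eq {R : Type*} [CommRing R] [IsLocalRing R]
    [Finite (ResidueField R)] (I : Ideal R) [HenselianRing R I] (hI : I ≤ maximalIdeal R)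
    {k : ℕ} (hk : maximalIdeal R ^ k ≤ I) {N : ℕ} (hN : (N : ResidueField R) ≠ 0)
    {y : ResidueField R} (hy : y ^ N = 1) : ∃ z : R, z ^ N = 1 ∧ residue R z = y := by
  have := Fintype.ofFinite (ResidueField R)
  have hN0 : N ≠ 0 := by rintro rfl; simp at hN
  obtain ⟨u, rfl⟩ := residue_surjective y
  set Q := Fintype.card (ResidueField R)
  have hQ : (Q : R) ∈ maximalIdeal R := by
    rw [← residue_eq_zero_iff, map_natCast]
    exact FiniteField.cast_card_eq_zero _
  have hu : u ^ N - 1 ∈ maximalIdeal R := by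
    rw [← residue_eq_zero_iff]; simp [hy]
  have hw : residue R (u ^ Q ^ k) = residue R u := by
    rw [map_pow, FiniteField.pow_card_pow]
  obtain ⟨z, hz, hzw⟩ := HenselianRing.is_henselian (I := I) (Polynomial.X ^ N - 1 : Polynomial R)
    (Polynomial.monic_X_pow_sub_C 1 hN0) (u ^ Q ^ k)
    (by
      have := pow_pow_sub_one_mem_pow hQ hu k
      rw [← pow_mul, mul_comm, pow_mul] at this
      simpa using hk (Ideal.pow_le_pow_right k.le_succ this))
    (by
      refine IsUnit.map _ ((residue_ne_zero_iff_isUnit _).1 ?_)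
      have : residue R u ≠ 0 := by
        intro h
        simp [h, hN0] at hy
      simp [Polynomial.derivative_X_pow, hN, this])
  refine ⟨z, ?_, ?_⟩
  · simpa [sub_eq_zero] using hz
  · rw [← hw, ← sub_eq_zero, ← map_sub, residue_eq_zero_iff]
    exact hI hzw

/-- In a finite field `K` with `q ^ (2 * r)` elements, the `(q ^ r + 1)`-th roots of unity span `K`
over any subfield. -/
theorem FiniteField.span_pow_eq_one_eq_top (F K : Type*) [Field F] [Field K] [Finite K]
    [Algebra F K] {q r : ℕ} (hK : Nat.card K = q ^ (2 * r)) (hq : 1 < q ^ r) :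
    Submodule.span F {x : K | x ^ (q ^ r + 1) = 1} = ⊤ := by
  classical
  have := Fintype.ofFinite K
  let S : Submonoid K :=
    { carrier := {x : K | x ^ (q ^ r + 1) = 1}
      one_mem' := by simp
      mul_mem' := fun {a b} ha hb => by simp_all [mul_pow] }
  let L := Algebra.adjoin F {x : K | x ^ (q ^ r + 1) = 1}
  have hL : Subalgebra.toSubmodule L = Submodule.span F {x : K | x ^ (q ^ r + 1) = 1} := by
    rw [Algebra.adjoin_eq_span, show {x : K | x ^ (q ^ r + 1) = 1} = (S : Set K) from rfl,
      Submonoid.closure_eq]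
  rw [← hL, Algebra.toSubmodule_eq_top]
  have := Fintype.ofFinite L
  let : Field L := Fintype.fieldOfDomain L
  have hcard : Nat.card Kˣ = (q ^ r - 1) * (q ^ r + 1) := by
    rw [Nat.card_units, hK, mul_comm 2 r, pow_mul, ← one_pow 2, Nat.sq_sub_sq]
    simp [mul_comm]
  obtain ⟨g, hg⟩ := IsCyclic.exists_ofOrder_eq_natCard (α := Kˣ)
  have hζ : orderOf (g ^ (q ^ r - 1)) = q ^ r + 1 := by
    rw [orderOf_pow_of_dvd (by omega) (by rw [hg, hcard]; exact dvd_mul_right _ _), hg, hcard]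
    exact Nat.mul_div_cancel_left _ (by omega)
  set ζ : K := ((g ^ (q ^ r - 1) : Kˣ) : K)
  have hζK : orderOf ζ = q ^ r + 1 := by rw [orderOf_units, hζ]
  have hmem : ζ ∈ L := Algebra.subset_adjoin (by
    change ζ ^ _ = 1
    rw [← hζK, pow_orderOf_eq_one])
  have hζL : orderOf (⟨ζ, hmem⟩ : L) = q ^ r + 1 := by
    rw [← hζK]
    exact (orderOf_injective (L.subtype : L →* K) Subtype.val_injective ⟨ζ, hmem⟩).symm
  have hne : (⟨ζ, hmem⟩ : L) ≠ 0 := by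
    intro h
    rw [h] at hζL
    simp at hζL
  have hdvd : q ^ r + 1 ∣ Nat.card L - 1 := by
    rw [← hζL, Nat.card_eq_fintype_card]
    exact orderOf_dvd_of_pow_eq_one (FiniteField.pow_card_sub_one_eq_one _ hne)
  have hL1 : 1 < Nat.card L := Finite.one_lt_card
  have hle := Nat.le_of_dvd (by omega) hdvd
  have hpow : Nat.card K = Nat.card L ^ Module.finrank L K := Module.natCard_eq_pow_finrank
  have hm : Module.finrank L K = 1 := by
    have hpos : 0 < Module.finrank L K := Module.finrank_pos
    by_contra hne1
    have h2 : Nat.card L ^ 2 ≤ Nat.card K := by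
      rw [hpow]; exact Nat.pow_le_pow_right (by omega) (by omega)
    rw [hK, mul_comm 2 r, pow_mul] at h2
    have := (Nat.pow_le_pow_iff_left two_ne_zero).1 h2
    omega
  rw [hm, pow_one] at hpow
  rw [← SetLike.coe_set_eq, Algebra.coe_top]
  refine Set.eq_of_subset_of_ncard_le (Set.subset_univ _) ?_
  rw [Set.ncard_univ, hpow]
  exact le_of_eq (Nat.card_coe_set_eq (L : Set K))

theorem IsLocalRing.map_maximalIdeal_eq_of_card_residueField {A B : Type*} [CommRing A]
    [IsLocalRing A] [CommRing B] [IsLocalRing B] [Algebra A B] [Module.Finite A B]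
    [Module.Free A B] [IsLocalHom (algebraMap A B)] [Finite (ResidueField A)]
    (h : Nat.card (ResidueField B) = Nat.card (ResidueField A) ^ Module.finrank A B) :
    (maximalIdeal A).map (algebraMap A B) = maximalIdeal B := by
  let : Field (A ⧸ maximalIdeal A) := Ideal.Quotient.field _
  have : Finite (A ⧸ maximalIdeal A) := inferInstanceAs (Finite (ResidueField A))
  have : Module.Finite (A ⧸ maximalIdeal A) (B ⧸ (maximalIdeal A).map (algebraMap A B)) :=
    Module.Finite.of_restrictScalars_finite A _ _
  have hle : (maximalIdeal A).map (algebraMap A B) ≤ maximalIdeal B :=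
    ((local_hom_TFAE (algebraMap A B)).out 0 2).1 ‹_›
  have hcard : Nat.card (B ⧸ (maximalIdeal A).map (algebraMap A B)) =
      Nat.card (B ⧸ maximalIdeal B) := by
    rw [Module.natCard_eq_pow_finrank (K := A ⧸ maximalIdeal A), finrank_quotient_map]
    exact h.symm
  have : Finite (B ⧸ (maximalIdeal A).map (algebraMap A B)) :=
    Module.finite_of_finite (A ⧸ maximalIdeal A)
  have hinj := ((Ideal.Quotient.factor_surjective hle).bijective_of_nat_card_le hcard.le).injective
  refine le_antisymm hle fun x hx ↦ ?_
  rw [← Ideal.Quotient.eq_zero_iff_mem] at hx ⊢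
  exact hinj (by simpa using hx)

/-- If `A → B` is a finite unramified extension of local rings whose residue field has
`q ^ (2 * r)` elements and `(q ^ r + 1)`-th roots of unity lift along `B → B / 𝔪`, then these
roots of unity span `B` over `A`. -/
theorem IsLocalRing.span_pow_eq_one_eq_top {A B : Type*} [CommRing A]
    [IsLocalRing A] [CommRing B] [IsLocalRing B] [Algebra A B] [Module.Finite A B]
    [Finite (ResidueField B)] {q r : ℕ}
    (hmap : (maximalIdeal A).map (algebraMap A B) = maximalIdeal B)
    (hB : Nat.card (ResidueField B) = q ^ (2 * r)) (hq : 1 < q ^ r)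
    (hlift : ∀ y : ResidueField B, y ^ (q ^ r + 1) = 1 →
      ∃ z : B, z ^ (q ^ r + 1) = 1 ∧ residue B z = y) :
    Submodule.span A {x : B | x ^ (q ^ r + 1) = 1} = ⊤ := by
  let : Field (A ⧸ maximalIdeal A) := Ideal.Quotient.field _
  have : ((maximalIdeal A).map (algebraMap A B)).IsMaximal := hmap ▸ inferInstance
  let : Field (B ⧸ (maximalIdeal A).map (algebraMap A B)) := Ideal.Quotient.field _
  let e : (B ⧸ (maximalIdeal A).map (algebraMap A B)) ≃+* ResidueField B := Ideal.quotEquivOfEq hmap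
  have he (b : B) : e (Ideal.Quotient.mk _ b) = residue B b := rfl
  have : Finite (B ⧸ (maximalIdeal A).map (algebraMap A B)) := Finite.of_equiv _ e.toEquiv.symm
  rw [← quotient_span_eq_top_iff_span_eq_top,
    ← FiniteField.span_pow_eq_one_eq_top (A ⧸ maximalIdeal A)
      (B ⧸ (maximalIdeal A).map (algebraMap A B)) ((Nat.card_congr e.toEquiv).trans hB) hq]
  congr 1
  ext y
  constructor
  · rintro ⟨z, hz, rfl⟩
    change Ideal.Quotient.mk _ z ^ _ = 1
    rw [← map_pow, show z ^ (q ^ r + 1) = 1 from hz, map_one]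
  · intro (hy : y ^ (q ^ r + 1) = 1)
    obtain ⟨z, hz, hzy⟩ := hlift (e y) (by rw [← map_pow, hy, map_one])
    exact ⟨z, hz, e.injective (by rw [he, hzy])⟩

theorem IsLocalRing.exists_maximalIdeal_pow_le {B : Type*} [CommRing B]
    [IsLocalRing B] [IsNoetherianRing B] [Ring.DimensionLEOne B] {I : Ideal B}
    (hI : I ≠ ⊥) : ∃ k : ℕ, maximalIdeal B ^ k ≤ I := by
  have hrad : maximalIdeal B ≤ I.radical := by
    rw [Ideal.radical_eq_sInf]
    refine le_sInf fun P ⟨hIP, hP⟩ ↦ ?_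
    have hne : P ≠ ⊥ := fun h ↦ hI (le_bot_iff.1 (h ▸ hIP))
    exact (eq_maximalIdeal (Ring.DimensionLEOne.maximalOfPrime hne hP)).ge
  exact Ideal.exists_pow_le_of_le_radical_of_fg hrad (IsNoetherian.noetherian _)

/-- The `(q ^ r + 1)`-th roots of unity span the ring of integers of an unramified extension `M / E`
of degree `2 * r` of `p`-adic fields, where `q` is the residue cardinality of `E`. -/
theorem mem_span_pow_eq_one_iff_mem_integralClosure (p q r : ℕ) [Fact p.Prime] (hr : 1 ≤ r)
    {E M : Type*} [Field E] [Field M]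
    [Algebra ℚ_[p] E] [FiniteDimensional ℚ_[p] E]
    [Algebra ℚ_[p] M] [FiniteDimensional ℚ_[p] M]
    [Algebra ℤ_[p] E] [IsScalarTower ℤ_[p] ℚ_[p] E]
    [Algebra ℤ_[p] M] [IsScalarTower ℤ_[p] ℚ_[p] M]
    [Algebra E M] [IsScalarTower ℚ_[p] E M] [IsScalarTower ℤ_[p] E M]
    [IsLocalRing (integralClosure ℤ_[p] E)] [IsLocalRing (integralClosure ℤ_[p] M)]
    (hEM : Module.finrank E M = 2 * r)
    (hqE : Nat.card (ResidueField (integralClosure ℤ_[p] E)) = q)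
    (hqM : Nat.card (ResidueField (integralClosure ℤ_[p] M)) = q ^ (2 * r)) :
    ∀ z : M, z ∈ Submodule.span (integralClosure ℤ_[p] E) {x : M | x ^ (q ^ r + 1) = 1} ↔
        z ∈ integralClosure ℤ_[p] M := by
  have hcharE : CharZero E := charZero_of_injective_algebraMap (algebraMap ℚ_[p] E).injective
  have hfinEM : FiniteDimensional E M := Module.Finite.of_restrictScalars_finite ℚ_[p] E M
  set A := integralClosure ℤ_[p] E
  set B := integralClosure ℤ_[p] M
  have hfinA : Module.Finite ℤ_[p] A := IsIntegralClosure.finite ℤ_[p] ℚ_[p] E A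
  have hfinB : Module.Finite ℤ_[p] B := IsIntegralClosure.finite ℤ_[p] ℚ_[p] M B
  have hdedA : IsDedekindDomain A := integralClosure.isDedekindDomain ℤ_[p] ℚ_[p] E
  have hdedB : IsDedekindDomain B := integralClosure.isDedekindDomain ℤ_[p] ℚ_[p] M
  have hfracA : IsFractionRing A E :=
    IsIntegralClosure.isFractionRing_of_finite_extension ℤ_[p] ℚ_[p] E A
  have htowerAM : IsScalarTower ℤ_[p] A M := IsScalarTower.of_algebraMap_eq fun x ↦ by
    rw [IsScalarTower.algebraMap_apply A E M, ← IsScalarTower.algebraMap_apply ℤ_[p] A E,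
      ← IsScalarTower.algebraMap_apply ℤ_[p] E M]
  have hmem (a : A) : algebraMap A M a ∈ B :=
    (Algebra.IsIntegral.isIntegral (R := ℤ_[p]) a).algebraMap
  let : Algebra A B := ((algebraMap A M).codRestrict B hmem).toAlgebra
  have htowerABM : IsScalarTower A B M := IsScalarTower.of_algebraMap_eq fun _ ↦ rfl
  have htowerAB : IsScalarTower ℤ_[p] A B := IsScalarTower.of_algebraMap_eq fun x ↦
    Subtype.ext (IsScalarTower.algebraMap_apply ℤ_[p] A M x)
  have hAB : Module.Finite A B := Module.Finite.of_restrictScalars_finite ℤ_[p] A B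
  have hclosure : IsIntegralClosure B A M := IsIntegralClosure.tower_top (R := ℤ_[p])
  have hpid : IsPrincipalIdealRing A := inferInstance
  have htf : Module.IsTorsionFree A M := .trans_faithfulSMul A E M
  have hfree : Module.Free A B := IsIntegralClosure.module_free A E M B
  have hrank : Module.finrank A B = 2 * r := (IsIntegralClosure.rank A E M B).trans hEM
  have hfaithA : FaithfulSMul ℤ_[p] A :=
    have : FaithfulSMul ℤ_[p] E := .trans ℤ_[p] ℚ_[p] E
    .tower_bot ℤ_[p] A E
  have hfaithB : FaithfulSMul ℤ_[p] B :=
    have : FaithfulSMul ℤ_[p] M := .trans ℤ_[p] ℚ_[p] M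
    .tower_bot ℤ_[p] B M
  have hlocB : IsLocalHom (algebraMap ℤ_[p] B) := inferInstance
  have hresP : Finite (ResidueField ℤ_[p]) := inferInstance
  have hresA : Finite (ResidueField A) := ResidueField.finite_of_finite (R := ℤ_[p]) hresP
  have hresB : Finite (ResidueField B) := ResidueField.finite_of_finite (R := ℤ_[p]) hresP
  have hq : 1 < q := hqE ▸ Finite.one_lt_card
  have hmap : (maximalIdeal A).map (algebraMap A B) = maximalIdeal B :=
    map_maximalIdeal_eq_of_card_residueField (by rw [hqM, hqE, hrank])
  have : IsAdicComplete (maximalIdeal ℤ_[p]) B := .of_finite_of_isNoetherianRing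
  let I := (maximalIdeal ℤ_[p]).map (algebraMap ℤ_[p] B)
  have : IsAdicComplete I B := (IsAdicComplete.map_algebraMap_iff _ _).2 this
  have hI : I ≠ ⊥ := by
    rw [Ne, Ideal.map_eq_bot_iff_of_injective (FaithfulSMul.algebraMap_injective ℤ_[p] B)]
    exact IsDiscreteValuationRing.not_a_field ℤ_[p]
  have hI' : I ≤ maximalIdeal B := ((local_hom_TFAE (algebraMap ℤ_[p] B)).out 0 2).1 hlocB
  obtain ⟨k, hk⟩ := exists_maximalIdeal_pow_le hI
  have hN : ((q ^ r + 1 : ℕ) : ResidueField B) ≠ 0 := by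
    have hq0 : (q : ResidueField B) = 0 := by
      have := Fintype.ofFinite (ResidueField A)
      have h := FiniteField.cast_card_eq_zero (ResidueField A)
      rw [← Nat.card_eq_fintype_card, hqE] at h
      simpa using congrArg (algebraMap (ResidueField A) (ResidueField B)) h
    rw [Nat.cast_add, Nat.cast_pow, hq0, zero_pow (by omega)]
    simp
  have htop := span_pow_eq_one_eq_top hmap hqM (Nat.one_lt_pow (by omega) hq)
    fun y hy ↦ exists_pow_eq_one_residue_eq I hI' hk hN hy
  have himage : {x : M | x ^ (q ^ r + 1) = 1} =
      (IsScalarTower.toAlgHom A B M).toLinearMap '' {x : B | x ^ (q ^ r + 1) = 1} := by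
    ext x
    constructor
    · intro (hx : x ^ (q ^ r + 1) = 1)
      have hxB : x ∈ B := IsIntegral.of_pow (Nat.succ_pos (q ^ r))
        (hx ▸ isIntegral_one)
      exact ⟨⟨x, hxB⟩, Subtype.ext hx, rfl⟩
    · rintro ⟨y, hy, rfl⟩
      exact congrArg Subtype.val hy
  intro z
  rw [himage, ← Submodule.map_span, htop]
  simp

/-- Let `E` be a finite extension of `ℚ_p` with residue cardinality `q`,
and `M/E` unramified of degree `2r` (so the residue field of `M` has cardinality `q^{2r}`).
Then the `O_E`-submodule of `O_M` generated by the roots of unity of order dividing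
`q^r + 1` is all of `O_M`. -/
theorem stmt_13 (p q r : ℕ) [Fact p.Prime] (hr : 1 ≤ r)
    {E M : Type*} [Field E] [Field M]
    [Algebra ℚ_[p] E] [FiniteDimensional ℚ_[p] E]
    [Algebra ℚ_[p] M] [FiniteDimensional ℚ_[p] M]
    [Algebra ℤ_[p] E] [IsScalarTower ℤ_[p] ℚ_[p] E]
    [Algebra ℤ_[p] M] [IsScalarTower ℤ_[p] ℚ_[p] M]
    [Algebra E M] [IsScalarTower ℚ_[p] E M] [IsScalarTower ℤ_[p] E M]
    [IsLocalRing (integralClosure ℤ_[p] E)] [IsLocalRing (integralClosure ℤ_[p] M)]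
    -- `M/E` unramified of degree `2r`: residue degree equals the field degree
    (hEM : Module.finrank E M = 2 * r)
    (hqE : Nat.card (ResidueField (integralClosure ℤ_[p] E)) = q)
    (hqM : Nat.card (ResidueField (integralClosure ℤ_[p] M)) = q ^ (2 * r))
    -- the action of the ring of integers `O_E` on `M`
    [Algebra (integralClosure ℤ_[p] E) M] [IsScalarTower (integralClosure ℤ_[p] E) E M] :
    ∀ z : M,
      z ∈ Submodule.span (integralClosure ℤ_[p] E) {x : M | x ^ (q ^ r + 1) = 1} ↔
        z ∈ integralClosure ℤ_[p] M := by
  exact mem_span_pow_eq_one_iff_mem_integralClosure p q r hr hEM hqE hqM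
end
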